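/- arXiv:2509.04568 — 4 statements merged into one kernel-verified Lean document; each statement's English description precedes it below -/
import Mathlib

section
/- The connective constant of self-osculating walks on the square lattice satisfies the upper bound limsup_{n→∞} (c_n)^{1/n} ≤ 2.73911. -/
open Filter

/-- A step is one of the `2d` signed standard unit vectors of `ℤ^d`. -/
def unitStep (d : ℕ) (s : Fin d → ℤ) : Prop :=
  ∃ i : Fin d, s = Pi.single i 1 ∨ s = Pi.single i (-1)

/-- A walk of length `n` on `ℤ^d` starting at the origin. -/
def IsWalk (d n : ℕ) (w : Fin (n + 1) → Fin d → ℤ) : Prop :=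
  w 0 = 0 ∧ ∀ j : Fin n, unitStep d (w j.succ - w j.castSucc)

/-- A self-osculating walk on the square lattice: a walk in which no lattice edge is
traversed twice, and whenever an interior vertex of the walk is visited at some other
time of the walk, the incoming and outgoing steps at that vertex are perpendicular. -/
def IsSOW (n : ℕ) (w : Fin (n + 1) → Fin 2 → ℤ) : Prop :=
  IsWalk 2 n w ∧
  (∀ j j' : Fin n, j ≠ j' →
    s(w j.castSucc, w j.succ) ≠ s(w j'.castSucc, w j'.succ)) ∧
  (∀ j : ℕ, ∀ hj0 : 0 < j, ∀ hjn : j < n,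
    (∃ j' : Fin (n + 1), (j' : ℕ) ≠ j ∧ w j' = w ⟨j, by omega⟩) →
    ∑ i : Fin 2,
      (w ⟨j, by omega⟩ - w ⟨j - 1, by omega⟩) i *
        (w ⟨j + 1, by omega⟩ - w ⟨j, by omega⟩) i = 0)

/-- The number of self-osculating walks of length `n` on the square lattice
starting at the origin. -/
noncomputable def sowCount (n : ℕ) : ℕ :=
  Nat.card {w : Fin (n + 1) → Fin 2 → ℤ // IsSOW n w}


set_option maxRecDepth 100000
namespace SOWc

/-- Lattice directions. -/
inductive Dr where | e | n | w | s
/-- Turns. -/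
inductive Tn where | L | S | R
/-- Ternary trees with uniform leaves and packed block leaves. -/
inductive T where
  | u (n : Nat) : T
  | b (n : Nat) : T
  | node (l s r : T) : T
open T

noncomputable def T.L : T → T := @T.rec (fun _ => T) (fun n => u n) (fun n => b n) (fun l _ _ _ _ _ => l)
noncomputable def T.S : T → T := @T.rec (fun _ => T) (fun n => u n) (fun n => b n) (fun _ s _ _ _ _ => s)
noncomputable def T.R : T → T := @T.rec (fun _ => T) (fun n => u n) (fun n => b n) (fun _ _ r _ _ _ => r)
noncomputable def T.isOne (t : T) : Bool :=
  T.rec (fun n => Nat.beq n 1) (fun _ => false) (fun _ _ _ _ _ _ => false) t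
def full (k : Nat) : Nat := Nat.sub (Nat.pow 2 (Nat.mul 24 (Nat.pow 3 k))) 1

def rp (n s v : Nat) : Nat :=
  Nat.mul v (Nat.div (Nat.sub (Nat.pow 2 (Nat.mul s n)) 1) (Nat.sub (Nat.pow 2 s) 1))
def ball0 : Nat := 0x900000000000000000000000000000000000000000000000000000000000000000000000000000000000000000000000000000000000000000000000000000000000000000000000000000000000000000000000000000000000000000000000000000000
def ball1 : Nat := 0x90000000000000000009990000000000000000009000000000000000000000000000000000000000000000000000000000000000000000000000000000000000000000000000000000000000000000000000000000000000000000000000000000000000000000000000000000000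
def ball2 : Nat := 0x9000000000000000000999000000000000000099999000000000000000099900000000000000000090000000000000000000000000000000000000000000000000000000000000000000000000000000000000000000000000000000000000000000000000000000000000000000000000000000000000000
def ball3 : Nat := 0x900000000000000000099900000000000000009999900000000000000999999900000000000000999990000000000000000999000000000000000000900000000000000000000000000000000000000000000000000000000000000000000000000000000000000000000000000000000000000000000000000000000000000000000
def ball4 : Nat := 0x90000000000000000009990000000000000000999990000000000000099999990000000000009999999990000000000009999999000000000000009999900000000000000009990000000000000000009000000000000000000000000000000000000000000000000000000000000000000000000000000000000000000000000000000000000000000000000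
def ball5 : Nat := 0x9000000000000000000999000000000000000099999000000000000009999999000000000000999999999000000000099999999999000000000099999999900000000000099999990000000000000099999000000000000000099900000000000000000090000000000000000000000000000000000000000000000000000000000000000000000000000000000000000000000000000
def ball6 : Nat := 0x900000000000000000099900000000000000009999900000000000000999999900000000000099999999900000000009999999999900000000999999999999900000000999999999990000000000999999999000000000000999999900000000000000999990000000000000000999000000000000000000900000000000000000000000000000000000000000000000000000000000000000000000000000000
def ball7 : Nat := 0x90000000000000000009990000000000000000999990000000000000099999990000000000009999999990000000000999999999990000000099999999999990000009999999999999990000009999999999999000000009999999999900000000009999999990000000000009999999000000000000009999900000000000000009990000000000000000009000000000000000000000000000000000000000000000000000000000000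
def ball8 : Nat := 0x9000000000000000000999000000000000000099999000000000000009999999000000000000999999999000000000099999999999000000009999999999999000000999999999999999000099999999999999999000099999999999999900000099999999999990000000099999999999000000000099999999900000000000099999990000000000000099999000000000000000099900000000000000000090000000000000000000000000000000000000000
def ball9 : Nat := 0x900000000000000000099900000000000000009999900000000000000999999900000000000099999999900000000009999999999900000000999999999999900000099999999999999900009999999999999999900999999999999999999900999999999999999990000999999999999999000000999999999999900000000999999999990000000000999999999000000000000999999900000000000000999990000000000000000999000000000000000000900000000000000000000
noncomputable def ball (n : Nat) : Nat := @Nat.rec (fun _ => Nat) ball0 (fun n _ => @Nat.rec (fun _ => Nat) ball1 (fun n _ => @Nat.rec (fun _ => Nat) ball2 (fun n _ => @Nat.rec (fun _ => Nat) ball3 (fun n _ => @Nat.rec (fun _ => Nat) ball4 (fun n _ => @Nat.rec (fun _ => Nat) ball5 (fun n _ => @Nat.rec (fun _ => Nat) ball6 (fun n _ => @Nat.rec (fun _ => Nat) ball7 (fun n _ => @Nat.rec (fun _ => Nat) ball8 (fun n _ => ball9) n) n) n) n) n) n) n) n) n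
noncomputable def chB (m u a : Nat) (d : Dr) (one : Nat) (ih : Dr → Nat → Nat → Nat) (x y B Q : Nat) : Nat :=
  @Nat.rec (fun _ => Nat) (@Nat.rec (fun _ => Nat) (ih d (Nat.lor B (Nat.shiftLeft u Q)) (Nat.sub (Nat.add Q a) 80)) (fun _ _ => 0) (Nat.land y m)) (fun _ _ => one) (Nat.land x m)
noncomputable def chT (m u a : Nat) (d : Dr) (ih : Dr → Nat → Nat → T) (x y B Q : Nat) : T :=
  @Nat.rec (fun _ => T) (@Nat.rec (fun _ => T) (ih d (Nat.lor B (Nat.shiftLeft u Q)) (Nat.sub (Nat.add Q a) 80)) (fun _ _ => T.u 0) (Nat.land y m)) (fun _ _ => T.u 1) (Nat.land x m)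
noncomputable def cmbT (l s r : T) : T :=
  @Bool.rec (fun _ => T) (node l s r) (@Bool.rec (fun _ => T) (node l s r) (@Bool.rec (fun _ => T) (node l s r) (u 1) r.isOne) s.isOne) l.isOne
noncomputable def cmbB (k l s r : Nat) : Nat :=
  Nat.lor l (Nat.lor (Nat.shiftLeft s k) (Nat.shiftLeft r (Nat.add k k)))
def mTe : Nat := 0x8200000000000000000000000000000000000000000000000000000000000000000000000000000000000000000000000000000000000000000000000000000000000000000000000000000000000000000000000000000000000000000000000000000000
def mSe : Nat := 0x8300000000000000000000000000000000000000000000000000000000000000000000000000000000000000000000000000000000000000000000000000000000000000000000000000000000000000000000000000000000000000000000000000000000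
def uTe : Nat := 0x300000000000000000000000000000000000000000000000000000000000000000000000000000000000000000000000000000000000000000000000000000000000000000000000000000000000000000000000000000000000000000000000000000000
def uSe : Nat := 0xb00000000000000000000000000000000000000000000000000000000000000000000000000000000000000000000000000000000000000000000000000000000000000000000000000000000000000000000000000000000000000000000000000000000
def mTn : Nat := 0x80000000000000000000400000000000000000000000000000000000000000000000000000000000000000000000000000000000000000000000000000000000000000000000000000000000000000000000000000000000000000000000000000000000000000000000000000000
def mSn : Nat := 0x80000000000000000000500000000000000000000000000000000000000000000000000000000000000000000000000000000000000000000000000000000000000000000000000000000000000000000000000000000000000000000000000000000000000000000000000000000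
def uTn : Nat := 0x500000000000000000000000000000000000000000000000000000000000000000000000000000000000000000000000000000000000000000000000000000000000000000000000000000000000000000000000000000000000000000000000000000000
def uSn : Nat := 0xd00000000000000000000000000000000000000000000000000000000000000000000000000000000000000000000000000000000000000000000000000000000000000000000000000000000000000000000000000000000000000000000000000000000
def mTw : Nat := 0xa0000000000000000000000000000000000000000000000000000000000000000000000000000000000000000000000000000000000000000000000000000000000000000000000000000000000000000000000000000000000000000000000000000000
def mSw : Nat := 0x1a0000000000000000000000000000000000000000000000000000000000000000000000000000000000000000000000000000000000000000000000000000000000000000000000000000000000000000000000000000000000000000000000000000000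
def uTw : Nat := 0x120000000000000000000000000000000000000000000000000000000000000000000000000000000000000000000000000000000000000000000000000000000000000000000000000000000000000000000000000000000000000000000000000000000
def uSw : Nat := 0x920000000000000000000000000000000000000000000000000000000000000000000000000000000000000000000000000000000000000000000000000000000000000000000000000000000000000000000000000000000000000000000000000000000
def mTs : Nat := 0xc000000000000000000000000000000000000000000000000000000000000000000000000000000000000000000000000000000000000000000000000000000000000000000000000000000000000000000000000000000000000
def mSs : Nat := 0x10000000000000000000c000000000000000000000000000000000000000000000000000000000000000000000000000000000000000000000000000000000000000000000000000000000000000000000000000000000000000000000000000000000000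
def uTs : Nat := 0x100000000000000000004000000000000000000000000000000000000000000000000000000000000000000000000000000000000000000000000000000000000000000000000000000000000000000000000000000000000000000000000000000000000
def uSs : Nat := 0x900000000000000000004000000000000000000000000000000000000000000000000000000000000000000000000000000000000000000000000000000000000000000000000000000000000000000000000000000000000000000000000000000000000
noncomputable def nBe (one k : Nat) (ih : Dr → Nat → Nat → Nat) (x y B Q : Nat) : Nat :=
  cmbB k (chB mTn uTn 160 Dr.n one ih x y B Q) (chB mSe uSe 84 Dr.e one ih x y B Q) (chB mTs uTs 0 Dr.s one ih x y B Q)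
noncomputable def nTe (ih : Dr → Nat → Nat → T) (x y B Q : Nat) : T :=
  cmbT (chT mTn uTn 160 Dr.n ih x y B Q) (chT mSe uSe 84 Dr.e ih x y B Q) (chT mTs uTs 0 Dr.s ih x y B Q)
noncomputable def nBn (one k : Nat) (ih : Dr → Nat → Nat → Nat) (x y B Q : Nat) : Nat :=
  cmbB k (chB mTw uTw 76 Dr.w one ih x y B Q) (chB mSn uSn 160 Dr.n one ih x y B Q) (chB mTe uTe 84 Dr.e one ih x y B Q)
noncomputable def nTn (ih : Dr → Nat → Nat → T) (x y B Q : Nat) : T :=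
  cmbT (chT mTw uTw 76 Dr.w ih x y B Q) (chT mSn uSn 160 Dr.n ih x y B Q) (chT mTe uTe 84 Dr.e ih x y B Q)
noncomputable def nBw (one k : Nat) (ih : Dr → Nat → Nat → Nat) (x y B Q : Nat) : Nat :=
  cmbB k (chB mTs uTs 0 Dr.s one ih x y B Q) (chB mSw uSw 76 Dr.w one ih x y B Q) (chB mTn uTn 160 Dr.n one ih x y B Q)
noncomputable def nTw (ih : Dr → Nat → Nat → T) (x y B Q : Nat) : T :=
  cmbT (chT mTs uTs 0 Dr.s ih x y B Q) (chT mSw uSw 76 Dr.w ih x y B Q) (chT mTn uTn 160 Dr.n ih x y B Q)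
noncomputable def nBs (one k : Nat) (ih : Dr → Nat → Nat → Nat) (x y B Q : Nat) : Nat :=
  cmbB k (chB mTe uTe 84 Dr.e one ih x y B Q) (chB mSs uSs 0 Dr.s one ih x y B Q) (chB mTw uTw 76 Dr.w one ih x y B Q)
noncomputable def nTs (ih : Dr → Nat → Nat → T) (x y B Q : Nat) : T :=
  cmbT (chT mTe uTe 84 Dr.e ih x y B Q) (chT mSs uSs 0 Dr.s ih x y B Q) (chT mTw uTw 76 Dr.w ih x y B Q)
noncomputable def gB (N k : Nat) : Dr → Nat → Nat → Nat :=
  @Nat.rec (fun _ => Dr → Nat → Nat → Nat) (fun _ _ _ => full 0)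
    (fun k ih d B Q => @Nat.rec (fun _ => Nat) (full (Nat.succ k)) (fun _ _ =>
      @Dr.rec (fun _ => Nat → Nat → (Dr → Nat → Nat → Nat) → Nat → Nat → Nat → Nat → Nat) nBe nBn nBw nBs d (full k) (Nat.mul 24 (Nat.pow 3 k)) ih (Nat.shiftRight B Q) (Nat.shiftRight N Q) B Q) (Nat.land (Nat.shiftRight N Q) (ball (Nat.succ k)))) k
noncomputable def toT (n : Nat) : T := @Bool.rec (fun _ => T) (b n) (u 1) (Nat.beq n (full 6))
noncomputable def gT (N k : Nat) : Dr → Nat → Nat → T :=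
  @Nat.rec (fun _ => Dr → Nat → Nat → T) (fun d B Q => toT (gB N 6 d B Q))
    (fun k ih d B Q => @Nat.rec (fun _ => T) (u 1) (fun _ _ =>
      @Dr.rec (fun _ => (Dr → Nat → Nat → T) → Nat → Nat → Nat → Nat → T) nTe nTn nTw nTs d ih (Nat.shiftRight B Q) (Nat.shiftRight N Q) B Q) (Nat.land (Nat.shiftRight N Q) (ball (Nat.add k 7)))) k
def N0 : Nat := Nat.shiftLeft 3 1720
def N1 : Nat := Nat.shiftLeft 131 1720
def B0 : Nat := 0x500000000000000000000000000000000000000000000000000000000000000000000000000000000000000000000000000000000000000000000000000000000000000000000000000000000000000000000000000000000000000000000000000000000000000000000000000000000000000000000000000000000000000000000000000000000000000000000000000000000000000000000000000000000000000000000000000000000000000000000000000000000000000000000000000000000000000000000000000000000000000000000000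
def B1 : Nat := 0x300000000000000000000000000000000000000000000000000000000000000000000000000000000000000000000000000000000000000000000000000000000000000000000000000000000000000000000000000000000000000000000000000000000000000000000000000000000000000000000000000000000000000000000000000000000000000000000000000000000000000000000000000000000000000000000000000000000000000000000000000000000000000000000000000000000000000000000000000000000000000000000000
def B2 : Nat := 0x100000000000000000004000000000000000000000000000000000000000000000000000000000000000000000000000000000000000000000000000000000000000000000000000000000000000000000000000000000000000000000000000000000000000000000000000000000000000000000000000000000000000000000000000000000000000000000000000000000000000000000000000000000000000000000000000000000000000000000000000000000000000000000000000000000000000000000000000000000000000000000000000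
noncomputable def D : T := cmbT (gT N0 9 Dr.n B0 1004) (gT N1 9 Dr.e B1 928) (gT N0 9 Dr.s B2 844)
def mk40 : Nat := rp 1 17496 (Nat.shiftLeft (Nat.sub (Nat.pow 2 1944) 1) 0)
def mk41 : Nat := rp 1 17496 (Nat.shiftLeft (Nat.sub (Nat.pow 2 1944) 1) 1944)
def mk42 : Nat := rp 1 17496 (Nat.shiftLeft (Nat.sub (Nat.pow 2 1944) 1) 3888)
def mk30 : Nat := rp 3 5832 (Nat.shiftLeft (Nat.sub (Nat.pow 2 648) 1) 0)
def mk31 : Nat := rp 3 5832 (Nat.shiftLeft (Nat.sub (Nat.pow 2 648) 1) 648)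
def mk32 : Nat := rp 3 5832 (Nat.shiftLeft (Nat.sub (Nat.pow 2 648) 1) 1296)
def mk20 : Nat := rp 9 1944 (Nat.shiftLeft (Nat.sub (Nat.pow 2 216) 1) 0)
def mk21 : Nat := rp 9 1944 (Nat.shiftLeft (Nat.sub (Nat.pow 2 216) 1) 216)
def mk22 : Nat := rp 9 1944 (Nat.shiftLeft (Nat.sub (Nat.pow 2 216) 1) 432)
def mk10 : Nat := rp 27 648 (Nat.shiftLeft (Nat.sub (Nat.pow 2 72) 1) 0)
def mk11 : Nat := rp 27 648 (Nat.shiftLeft (Nat.sub (Nat.pow 2 72) 1) 72)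
def mk12 : Nat := rp 27 648 (Nat.shiftLeft (Nat.sub (Nat.pow 2 72) 1) 144)
def mk00 : Nat := rp 81 216 (Nat.shiftLeft (Nat.sub (Nat.pow 2 24) 1) 0)
def mk01 : Nat := rp 81 216 (Nat.shiftLeft (Nat.sub (Nat.pow 2 24) 1) 24)
def mk02 : Nat := rp 81 216 (Nat.shiftLeft (Nat.sub (Nat.pow 2 24) 1) 48)
noncomputable def sg (m0 m1 m2 a X : Nat) : Nat :=
  Nat.lor (Nat.land X m0) (Nat.lor (Nat.shiftLeft (Nat.land X m1) a) (Nat.shiftLeft (Nat.land X m2) (Nat.add a a)))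
noncomputable def spread (X : Nat) : Nat := (sg mk00 mk01 mk02 48 (sg mk10 mk11 mk12 144 (sg mk20 mk21 mk22 432 (sg mk30 mk31 mk32 1296 (sg mk40 mk41 mk42 3888 X)))))
noncomputable def bc (X : Nat) : Nat := Nat.lor X (Nat.lor (Nat.shiftLeft X 24) (Nat.shiftLeft X 48))
noncomputable def pipe (e S : Nat) : Nat := bc (spread (Nat.shiftRight S e))
def ones : Nat := rp 729 24 1
def kones : Nat := rp 729 24 25
def lo16 : Nat := rp 729 24 65535
def lo18 : Nat := rp 729 24 262143
def lo22 : Nat := rp 729 24 4194303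
def top : Nat := Nat.sub (Nat.pow 2 17496) 1
noncomputable def blk (t : T) : Nat := T.rec (fun n => Nat.mul n ones) (fun n => n) (fun _ _ _ _ _ _ => 0) t
noncomputable def uv (t : T) : Nat := T.rec (fun n => n) (fun _ => 0) (fun _ _ _ _ _ _ => 0) t
noncomputable def isU (t : T) : Bool := T.rec (fun _ => true) (fun _ => false) (fun _ _ _ _ _ _ => false) t
noncomputable def ok (V : T) : Nat → Bool := @T.rec (fun _ => Nat → Bool) (fun n _ => Nat.ble n 65535)
  (fun n k => and (Nat.beq k 0) (Nat.beq (Nat.land n lo16) n))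
  (fun _ _ _ l s r k => @Nat.rec (fun _ => Bool) false (fun k _ => and (l k) (and (s k) (r k))) k) V
noncomputable def bck (m e : Nat) (v a b c : T) : Bool :=
  (fun V Z => and (Nat.ble Z V) (Nat.beq (Nat.land (Nat.sub V Z) lo22) (Nat.sub V Z)))
    (Nat.mul 115 (blk v))
    (Nat.add (Nat.mul 42 (Nat.land (pipe e (Nat.add (Nat.add (blk a) (blk b)) (blk c))) (Nat.land m lo18))) (Nat.land m ones))
noncomputable def chk (D : T) : Nat → Nat → T → T → T → T → Bool := @T.rec (fun _ => Nat → Nat → T → T → T → T → Bool)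
  (fun m k e v a b c => @Nat.rec (fun _ => Bool) true (fun _ _ => @Bool.rec (fun _ => Bool) (and (Nat.beq k 0) (bck top e v a b c)) (Nat.ble (Nat.add (Nat.mul 42 (Nat.add (Nat.add (uv a) (uv b)) (uv c))) 1) (Nat.mul 115 (uv v))) (and (isU v) (and (isU a) (and (isU b) (isU c))))) m)
  (fun m k e v a b c => and (Nat.beq k 0) (bck m e v a b c))
  (fun _ _ _ il is ir k _ v a b c => @Nat.rec (fun _ => Bool) false (fun k _ => and (il k 0 (T.L v) (T.L a) (T.L b) (T.L c)) (and (is k 5832 (T.S v) (T.S a) (T.S b) (T.S c)) (ir k 11664 (T.R v) (T.R a) (T.R b) (T.R c)))) k) D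

/-! The weight tree: obtained by power iteration; nothing needs to be proved about it. -/
noncomputable def fb (n : Nat) : T := @Nat.rec (fun _ => T) (b 0) (fun p _ => b (Nat.succ p)) n
noncomputable def rot (X : Nat) : Nat := Nat.lor (spread X) (Nat.lor (Nat.shiftLeft (spread (Nat.shiftRight X 5832)) 24) (Nat.shiftLeft (spread (Nat.shiftRight X 11664)) 48))
noncomputable def pk (n : Nat) : Nat := Nat.lor (Nat.shiftLeft n 64) (Nat.mod n 18446744073709551557)
noncomputable def pkT (t : T) : T := T.rec (fun n => u n) (fun n => fb (pk n)) (fun _ _ _ x y z => node x y z) t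
noncomputable def rotT (t : T) : T := T.rec (fun n => u n) (fun n => fb (pk (rot (Nat.shiftRight n 64)))) (fun _ _ _ x y z => node x y z) t
noncomputable def uw (t sh : Nat) (x : T) : Nat := T.rec (fun n => n) (fun n => Nat.land (Nat.shiftRight n (Nat.sub t sh)) 65535) (fun _ _ _ _ _ _ => 0) x
noncomputable def stp (mp bm w1 w2 sh : Nat) (D x : T) : T := @T.rec (fun _ => Nat → T → T → T → T)
  (fun m t a b c => u (@Nat.rec (fun _ => Nat) 0 (fun _ _ => Nat.add (Nat.shiftRight (Nat.add (Nat.add (uw t sh a) (uw t sh b)) (uw t sh c)) sh) 25) m))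
  (fun m t a q c => b (Nat.land (Nat.add (Nat.mul (Nat.land (Nat.shiftRight (Nat.add (Nat.add (blk a) (blk q)) (blk c)) t) mp) bm) kones) (Nat.shiftRight m 64)))
  (fun _ _ _ il is ir _ a b c => node (il sh (T.L a) (T.L b) (T.L c)) (is (Nat.add sh w1) (T.S a) (T.S b) (T.S c)) (ir (Nat.add sh w2) (T.R a) (T.R b) (T.R c))) D 0 (T.L x) (T.S x) (T.R x)
def mp0 : Nat := rp 243 72 (rp 1 24 65535)
def bm0 : Nat := Nat.add (Nat.add 1 (Nat.pow 2 24)) (Nat.pow 2 48)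
def mp1 : Nat := rp 81 216 (rp 3 24 65535)
def bm1 : Nat := Nat.add (Nat.add 1 (Nat.pow 2 72)) (Nat.pow 2 144)
def mp2 : Nat := rp 27 648 (rp 9 24 65535)
def bm2 : Nat := Nat.add (Nat.add 1 (Nat.pow 2 216)) (Nat.pow 2 432)
def mp3 : Nat := rp 9 1944 (rp 27 24 65535)
def bm3 : Nat := Nat.add (Nat.add 1 (Nat.pow 2 648)) (Nat.pow 2 1296)
def mp4 : Nat := rp 3 5832 (rp 81 24 65535)
def bm4 : Nat := Nat.add (Nat.add 1 (Nat.pow 2 1944)) (Nat.pow 2 3888)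
def mp5 : Nat := rp 1 17496 (rp 243 24 65535)
def bm5 : Nat := Nat.add (Nat.add 1 (Nat.pow 2 5832)) (Nat.pow 2 11664)
noncomputable def D0 : T := pkT D
noncomputable def D1 : T := rotT D0
noncomputable def D2 : T := rotT D1
noncomputable def D3 : T := rotT D2
noncomputable def D4 : T := rotT D3
noncomputable def D5 : T := rotT D4
noncomputable def x0 : T := u 10922
noncomputable def x1 : T := stp mp4 bm4 1944 3888 0 D4 x0
noncomputable def x2 : T := stp mp3 bm3 648 1296 1 D3 x1
noncomputable def x3 : T := stp mp2 bm2 216 432 2 D2 x2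
noncomputable def x4 : T := stp mp1 bm1 72 144 1 D1 x3
noncomputable def x5 : T := stp mp0 bm0 24 48 2 D0 x4
noncomputable def x6 : T := stp mp5 bm5 5832 11664 1 D5 x5
noncomputable def x7 : T := stp mp4 bm4 1944 3888 2 D4 x6
noncomputable def x8 : T := stp mp3 bm3 648 1296 1 D3 x7
noncomputable def x9 : T := stp mp2 bm2 216 432 2 D2 x8
noncomputable def x10 : T := stp mp1 bm1 72 144 1 D1 x9
noncomputable def x11 : T := stp mp0 bm0 24 48 1 D0 x10
noncomputable def x12 : T := stp mp5 bm5 5832 11664 2 D5 x11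
noncomputable def x13 : T := stp mp4 bm4 1944 3888 1 D4 x12
noncomputable def x14 : T := stp mp3 bm3 648 1296 2 D3 x13
noncomputable def x15 : T := stp mp2 bm2 216 432 1 D2 x14
noncomputable def x16 : T := stp mp1 bm1 72 144 2 D1 x15
noncomputable def x17 : T := stp mp0 bm0 24 48 1 D0 x16
noncomputable def V : T := x17
theorem main_check : and (ok V 10) (chk D 10 0 V (T.L V) (T.S V) (T.R V)) = true := by decide +kernel
set_option maxRecDepth 20000
def turn : Dr → Tn → Dr
  | .e, .L => .n | .e, .S => .e | .e, .R => .s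
  | .n, .L => .w | .n, .S => .n | .n, .R => .e
  | .w, .L => .s | .w, .S => .w | .w, .R => .n
  | .s, .L => .e | .s, .S => .s | .s, .R => .w
def dx : Dr → ℤ | .e => 1 | .n => 0 | .w => -1 | .s => 0
def dy : Dr → ℤ | .e => 0 | .n => 1 | .w => 0 | .s => -1
def edge : Dr → ℤ | .e => 1 | .n => 2 | .w => -3 | .s => -78
def dig : Tn → ℕ | .L => 0 | .S => 1 | .R => 2
def idx : List Tn → ℕ
  | [] => 0
  | t :: w => dig t * 3 ^ w.length + idx w

theorem idx_lt (w : List Tn) : idx w < 3 ^ w.length := by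
  induction w with
  | nil => simp [idx]
  | cons t w ih =>
    have : dig t ≤ 2 := by cases t <;> simp [dig]
    simp only [idx, List.length_cons, pow_succ]
    nlinarith

/-- conflict with the marks `N` at a single step -/
def Hit (N : ℕ) (t : Tn) (d : Dr) (x y : ℤ) : Prop :=
  ∃ i : ℕ, N.testBit i = true ∧ ((i : ℤ) = 1720 + 4 * x + 80 * y + edge d ∨
    (i : ℤ) = 1720 + 4 * x + 80 * y + (4 * dx d + 80 * dy d) + 3 ∨
    (t = Tn.S ∧ (i : ℤ) = 1720 + 4 * x + 80 * y))

def Cf (N : ℕ) : Dr → ℤ → ℤ → List Tn → Prop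
  | _, _, _, [] => False
  | d, x, y, t :: w => Hit N t (turn d t) x y ∨
      Cf N (turn d t) (x + dx (turn d t)) (y + dy (turn d t)) w

def MaskOk (m : ℕ) (t : Tn) (d : Dr) : Prop :=
  ∀ i : ℕ, m.testBit i = true → ((i : ℤ) = 800 + edge d ∨
    (i : ℤ) = 800 + (4 * dx d + 80 * dy d) + 3 ∨ (t = Tn.S ∧ (i : ℤ) = 800))

theorem maskT (m a c : ℕ) (t : Tn) (d : Dr) (h : m = 2 ^ a ||| 2 ^ c)
    (ha : (a : ℤ) = 800 + edge d) (hc : (c : ℤ) = 800 + (4 * dx d + 80 * dy d) + 3) :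
    MaskOk m t d := by
  intro i hi
  subst h
  rw [Nat.testBit_or, Nat.testBit_two_pow, Nat.testBit_two_pow] at hi
  simp only [Bool.or_eq_true, decide_eq_true_eq] at hi
  rcases hi with rfl | rfl
  · exact Or.inl ha
  · exact Or.inr (Or.inl hc)

theorem maskS (m a c : ℕ) (d : Dr) (h : m = 2 ^ a ||| 2 ^ c ||| 2 ^ 800)
    (ha : (a : ℤ) = 800 + edge d) (hc : (c : ℤ) = 800 + (4 * dx d + 80 * dy d) + 3) :
    MaskOk m Tn.S d := by
  intro i hi
  subst h
  rw [Nat.testBit_or, Nat.testBit_or, Nat.testBit_two_pow, Nat.testBit_two_pow,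
    Nat.testBit_two_pow] at hi
  simp only [Bool.or_eq_true, decide_eq_true_eq] at hi
  rcases hi with (rfl | rfl) | rfl
  · exact Or.inl ha
  · exact Or.inr (Or.inl hc)
  · exact Or.inr (Or.inr ⟨rfl, rfl⟩)

theorem mTe_ok (t : Tn) : MaskOk mTe t Dr.e := maskT _ 801 807 t _ (by decide +kernel) rfl rfl
theorem mTn_ok (t : Tn) : MaskOk mTn t Dr.n := maskT _ 802 883 t _ (by decide +kernel) rfl rfl
theorem mTw_ok (t : Tn) : MaskOk mTw t Dr.w := maskT _ 797 799 t _ (by decide +kernel) rfl rfl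
theorem mTs_ok (t : Tn) : MaskOk mTs t Dr.s := maskT _ 722 723 t _ (by decide +kernel) rfl rfl
theorem mSe_ok : MaskOk mSe Tn.S Dr.e := maskS _ 801 807 _ (by decide +kernel) rfl rfl
theorem mSn_ok : MaskOk mSn Tn.S Dr.n := maskS _ 802 883 _ (by decide +kernel) rfl rfl
theorem mSw_ok : MaskOk mSw Tn.S Dr.w := maskS _ 797 799 _ (by decide +kernel) rfl rfl
theorem mSs_ok : MaskOk mSs Tn.S Dr.s := maskS _ 722 723 _ (by decide +kernel) rfl rfl

theorem exists_bit {n : ℕ} (h : n ≠ 0) : ∃ i, n.testBit i = true := by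
  by_contra hh
  push Not at hh
  exact h (Nat.eq_of_testBit_eq (by simpa using hh))

theorem hit_of_mask {N m Q : ℕ} {t : Tn} {d : Dr} {x y : ℤ} (hm : MaskOk m t d)
    (hQ : (Q : ℤ) = 920 + 4 * x + 80 * y) (h : Nat.land (Nat.shiftRight N Q) m ≠ 0) :
    Hit N t d x y := by
  obtain ⟨i, hi⟩ := exists_bit h
  have hi' : ((N >>> Q) &&& m).testBit i = true := hi
  rw [Nat.testBit_and, Nat.testBit_shiftRight, Bool.and_eq_true] at hi'
  refine ⟨Q + i, hi'.1, ?_⟩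
  have := hm i hi'.2
  push_cast
  rcases this with h | h | ⟨h, h'⟩
  · left; omega
  · right; left; omega
  · right; right; exact ⟨h, by omega⟩

theorem ball_lt (k : ℕ) : ball k < 2 ^ 1560 := by
  rcases k with _|_|_|_|_|_|_|_|_|_|k
  · show ball0 < 2 ^ 1560; decide +kernel
  · show ball1 < 2 ^ 1560; decide +kernel
  · show ball2 < 2 ^ 1560; decide +kernel
  · show ball3 < 2 ^ 1560; decide +kernel
  · show ball4 < 2 ^ 1560; decide +kernel
  · show ball5 < 2 ^ 1560; decide +kernel
  · show ball6 < 2 ^ 1560; decide +kernel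
  · show ball7 < 2 ^ 1560; decide +kernel
  · show ball8 < 2 ^ 1560; decide +kernel
  · show ball9 < 2 ^ 1560; decide +kernel
  · show ball9 < 2 ^ 1560; decide +kernel

def Low (N : ℕ) : Prop := ∀ i, N.testBit i = true → 1720 ≤ i

theorem Q_ge {N Q k : ℕ} (hN : Low N) (h : Nat.land (Nat.shiftRight N Q) (ball k) ≠ 0) :
    161 ≤ Q := by
  obtain ⟨i, hi⟩ := exists_bit h
  have hi' : ((N >>> Q) &&& ball k).testBit i = true := hi
  rw [Nat.testBit_and, Nat.testBit_shiftRight, Bool.and_eq_true] at hi'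
  have h1 := hN _ hi'.1
  have h2 : i < 1560 := by
    by_contra hc
    have : ball k < 2 ^ i := lt_of_lt_of_le (ball_lt k) (Nat.pow_le_pow_right (by norm_num) (by omega))
    rw [Nat.testBit_lt_two_pow this] at hi'
    simp at hi'
  omega

def AllOn (n : ℕ) (i : ℕ) : Prop := ∀ j < 24, n.testBit (24 * i + j) = true

theorem full_on (k i : ℕ) (h : i < 3 ^ k) : AllOn (full k) i := by
  intro j hj
  show (2 ^ (24 * 3 ^ k) - 1).testBit _ = true
  rw [Nat.testBit_two_pow_sub_one]
  simp only [decide_eq_true_eq]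
  omega

theorem chB_spec {N m u a Q k : ℕ} {t : Tn} {d : Dr} {ih : Dr → ℕ → ℕ → ℕ} {x y : ℤ} {B : ℕ}
    {w : List Tn} (hw : w.length = k) (X : ℕ)
    (hm : MaskOk m t d) (hQ : (Q : ℤ) = 920 + 4 * x + 80 * y) (hQ' : 161 ≤ Q)
    (ha : (a : ℤ) = 80 + (4 * dx d + 80 * dy d))
    (hih : ∀ B Q : ℕ, (Q : ℤ) = 920 + 4 * (x + dx d) + 80 * (y + dy d) →
      AllOn (ih d B Q) (idx w) ∨ Cf N d (x + dx d) (y + dy d) w) :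
    AllOn (chB m u a d (full k) ih X (Nat.shiftRight N Q) B Q) (idx w) ∨
      (Hit N t d x y ∨ Cf N d (x + dx d) (y + dy d) w) := by
  unfold chB
  rcases h1 : Nat.land X m with _ | n
  · rcases h2 : Nat.land (Nat.shiftRight N Q) m with _ | n
    · have := hih (Nat.lor B (Nat.shiftLeft u Q)) (Nat.sub (Nat.add Q a) 80) (by
        show ((Q + a - 80 : ℕ) : ℤ) = _
        omega)
      rcases this with h | h
      · exact Or.inl h
      · exact Or.inr (Or.inr h)
    · right; left
      exact hit_of_mask hm hQ (by rw [h2]; simp)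
  · left
    exact full_on k _ (by rw [← hw]; exact idx_lt w)

theorem cmbB_on {k l s r : ℕ} (t : Tn) (w : List Tn) (hw : w.length = k)
    (h : AllOn (match t with | .L => l | .S => s | .R => r) (idx w)) :
    AllOn (cmbB (Nat.mul 24 (Nat.pow 3 k)) l s r) (idx (t :: w)) := by
  intro j hj
  have h := h j hj
  show (l ||| (s <<< (24 * 3 ^ k) ||| r <<< (24 * 3 ^ k + 24 * 3 ^ k))).testBit _ = true
  simp only [Nat.testBit_or, Nat.testBit_shiftLeft, idx, hw]
  generalize 3 ^ k = K at *
  cases t <;> simp only [dig] at *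
  · simp [h]
  · rw [show 24 * (1 * K + idx w) + j - 24 * K = 24 * idx w + j by omega, h]
    simp; right; left; omega
  · rw [show 24 * (2 * K + idx w) + j - (24 * K + 24 * K) = 24 * idx w + j by omega, h]
    simp; right; right; omega

theorem gB_spec {N : ℕ} (hN : Low N) (k : ℕ) : ∀ (d : Dr) (x y : ℤ) (B Q : ℕ) (w : List Tn),
    w.length = k → (Q : ℤ) = 920 + 4 * x + 80 * y →
    AllOn (gB N k d B Q) (idx w) ∨ Cf N d x y w := by
  induction k with
  | zero =>
    intro d x y B Q w hw hQ
    left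
    exact full_on 0 _ (by rw [← hw]; exact idx_lt w)
  | succ k ih =>
    intro d x y B Q w hw hQ
    have hfull : AllOn (full (Nat.succ k)) (idx w) := full_on _ _ (by rw [Nat.succ_eq_add_one, ← hw]; exact idx_lt w)
    have e : gB N (k + 1) d B Q = @Nat.rec (fun _ => Nat) (full (Nat.succ k)) (fun _ _ =>
      @Dr.rec (fun _ => Nat → Nat → (Dr → Nat → Nat → Nat) → Nat → Nat → Nat → Nat → Nat) nBe nBn nBw nBs d (full k) (Nat.mul 24 (Nat.pow 3 k)) (gB N k) (Nat.shiftRight B Q) (Nat.shiftRight N Q) B Q) (Nat.land (Nat.shiftRight N Q) (ball (Nat.succ k))) := rfl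
    rw [e]
    rcases h1 : Nat.land (Nat.shiftRight N Q) (ball (Nat.succ k)) with _ | n
    · left; exact hfull
    · have hQ' := Q_ge hN (k := Nat.succ k) (by rw [h1]; simp)
      rcases w with _ | ⟨t, w⟩
      · simp at hw
      have hv : w.length = k := by simpa using hw
      have key : ∀ (m u a : ℕ), MaskOk m t (turn d t) →
          (a : ℤ) = 80 + (4 * dx (turn d t) + 80 * dy (turn d t)) →
          AllOn (chB m u a (turn d t) (full k) (gB N k) (Nat.shiftRight B Q) (Nat.shiftRight N Q) B Q)
            (idx w) ∨ Cf N d x y (t :: w) := by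
        intro m u a hm ha
        exact chB_spec hv _ hm hQ hQ' ha (fun B Q h => ih _ _ _ B Q w hv h)
      cases d <;> cases t
      · exact (key mTn uTn 160 (mTn_ok _) rfl).imp_left (cmbB_on .L w hv)
      · exact (key mSe uSe 84 mSe_ok rfl).imp_left (cmbB_on .S w hv)
      · exact (key mTs uTs 0 (mTs_ok _) rfl).imp_left (cmbB_on .R w hv)
      · exact (key mTw uTw 76 (mTw_ok _) rfl).imp_left (cmbB_on .L w hv)
      · exact (key mSn uSn 160 mSn_ok rfl).imp_left (cmbB_on .S w hv)
      · exact (key mTe uTe 84 (mTe_ok _) rfl).imp_left (cmbB_on .R w hv)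
      · exact (key mTs uTs 0 (mTs_ok _) rfl).imp_left (cmbB_on .L w hv)
      · exact (key mSw uSw 76 mSw_ok rfl).imp_left (cmbB_on .S w hv)
      · exact (key mTn uTn 160 (mTn_ok _) rfl).imp_left (cmbB_on .R w hv)
      · exact (key mTe uTe 84 (mTe_ok _) rfl).imp_left (cmbB_on .L w hv)
      · exact (key mSs uSs 0 mSs_ok rfl).imp_left (cmbB_on .S w hv)
      · exact (key mTw uTw 76 (mTw_ok _) rfl).imp_left (cmbB_on .R w hv)

/-- the tree says that the word is allowed -/
def Dok : T → List Tn → Prop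
  | .u n, _ => n ≠ 0
  | .b n, w => AllOn n (idx w)
  | .node _ _ _, [] => False
  | .node l _ _, .L :: w => Dok l w
  | .node _ s _, .S :: w => Dok s w
  | .node _ _ r, .R :: w => Dok r w

theorem isOne_eq {t : T} (h : t.isOne = true) : t = u 1 := by
  cases t with
  | u n =>
    have : Nat.beq n 1 = true := h
    rw [Nat.eq_of_beq_eq_true this]
  | b n => exact absurd h (by simp [T.isOne])
  | node l s r => exact absurd h (by simp [T.isOne])

theorem cmbT_ok {l s r : T} (t : Tn) (w : List Tn)
    (h : Dok (match t with | .L => l | .S => s | .R => r) w) : Dok (cmbT l s r) (t :: w) := by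
  have h' : Dok (node l s r) (t :: w) := by cases t <;> exact h
  unfold cmbT
  cases l.isOne
  · exact h'
  cases s.isOne
  · exact h'
  cases r.isOne
  · exact h'
  · simp [Dok]

theorem chT_spec {N m u a Q : ℕ} {t : Tn} {d : Dr} {ih : Dr → ℕ → ℕ → T} {x y : ℤ} {B : ℕ}
    {w : List Tn} (X : ℕ)
    (hm : MaskOk m t d) (hQ : (Q : ℤ) = 920 + 4 * x + 80 * y) (hQ' : 161 ≤ Q)
    (ha : (a : ℤ) = 80 + (4 * dx d + 80 * dy d))
    (hih : ∀ B Q : ℕ, (Q : ℤ) = 920 + 4 * (x + dx d) + 80 * (y + dy d) →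
      Dok (ih d B Q) w ∨ Cf N d (x + dx d) (y + dy d) w) :
    Dok (chT m u a d ih X (Nat.shiftRight N Q) B Q) w ∨
      (Hit N t d x y ∨ Cf N d (x + dx d) (y + dy d) w) := by
  unfold chT
  rcases h1 : Nat.land X m with _ | n
  · rcases h2 : Nat.land (Nat.shiftRight N Q) m with _ | n
    · have := hih (Nat.lor B (Nat.shiftLeft u Q)) (Nat.sub (Nat.add Q a) 80) (by
        show ((Q + a - 80 : ℕ) : ℤ) = _
        omega)
      rcases this with h | h
      · exact Or.inl h
      · exact Or.inr (Or.inr h)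
    · right; left
      exact hit_of_mask hm hQ (by rw [h2]; simp)
  · left
    simp [Dok]

theorem gT_spec {N : ℕ} (hN : Low N) (k : ℕ) : ∀ (d : Dr) (x y : ℤ) (B Q : ℕ) (w : List Tn),
    w.length = k + 6 → (Q : ℤ) = 920 + 4 * x + 80 * y →
    Dok (gT N k d B Q) w ∨ Cf N d x y w := by
  induction k with
  | zero =>
    intro d x y B Q w hw hQ
    refine (gB_spec hN 6 d x y B Q w (by omega) hQ).imp_left fun h => ?_
    show Dok (toT (gB N 6 d B Q)) w
    unfold toT
    cases Nat.beq (gB N 6 d B Q) (full 6)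
    · exact h
    · simp [Dok]
  | succ k ih =>
    intro d x y B Q w hw hQ
    have e : gT N (k + 1) d B Q = @Nat.rec (fun _ => T) (u 1) (fun _ _ =>
      @Dr.rec (fun _ => (Dr → Nat → Nat → T) → Nat → Nat → Nat → Nat → T) nTe nTn nTw nTs d (gT N k) (Nat.shiftRight B Q) (Nat.shiftRight N Q) B Q) (Nat.land (Nat.shiftRight N Q) (ball (Nat.add k 7))) := rfl
    rw [e]
    rcases h1 : Nat.land (Nat.shiftRight N Q) (ball (Nat.add k 7)) with _ | n
    · left; simp [Dok]
    · have hQ' := Q_ge hN (k := Nat.add k 7) (by rw [h1]; simp)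
      rcases w with _ | ⟨t, w⟩
      · simp at hw
      have hw : w.length = k + 6 := by simp at hw; omega
      have key : ∀ (m u a : ℕ), MaskOk m t (turn d t) →
          (a : ℤ) = 80 + (4 * dx (turn d t) + 80 * dy (turn d t)) →
          Dok (chT m u a (turn d t) (gT N k) (Nat.shiftRight B Q) (Nat.shiftRight N Q) B Q)
            w ∨ Cf N d x y (t :: w) := by
        intro m u a hm ha
        exact chT_spec _ hm hQ hQ' ha (fun B Q h => ih _ _ _ B Q w hw h)
      cases d <;> cases t
      · exact (key mTn uTn 160 (mTn_ok _) rfl).imp_left (cmbT_ok .L w)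
      · exact (key mSe uSe 84 mSe_ok rfl).imp_left (cmbT_ok .S w)
      · exact (key mTs uTs 0 (mTs_ok _) rfl).imp_left (cmbT_ok .R w)
      · exact (key mTw uTw 76 (mTw_ok _) rfl).imp_left (cmbT_ok .L w)
      · exact (key mSn uSn 160 mSn_ok rfl).imp_left (cmbT_ok .S w)
      · exact (key mTe uTe 84 (mTe_ok _) rfl).imp_left (cmbT_ok .R w)
      · exact (key mTs uTs 0 (mTs_ok _) rfl).imp_left (cmbT_ok .L w)
      · exact (key mSw uSw 76 mSw_ok rfl).imp_left (cmbT_ok .S w)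
      · exact (key mTn uTn 160 (mTn_ok _) rfl).imp_left (cmbT_ok .R w)
      · exact (key mTe uTe 84 (mTe_ok _) rfl).imp_left (cmbT_ok .L w)
      · exact (key mSs uSs 0 mSs_ok rfl).imp_left (cmbT_ok .S w)
      · exact (key mTw uTw 76 (mTw_ok _) rfl).imp_left (cmbT_ok .R w)

theorem N0_bit {i : ℕ} (h : N0.testBit i = true) : i = 1720 ∨ i = 1721 := by
  have h : ((2 ^ 0 ||| 2 ^ 1 : ℕ) <<< 1720).testBit i = true := h
  rw [Nat.testBit_shiftLeft, Nat.testBit_or, Nat.testBit_two_pow, Nat.testBit_two_pow] at h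
  simp only [Bool.and_eq_true, Bool.or_eq_true, decide_eq_true_eq] at h
  omega

theorem N1_bit {i : ℕ} (h : N1.testBit i = true) : i = 1720 ∨ i = 1721 ∨ i = 1727 := by
  have h : (((2 ^ 0 ||| 2 ^ 1) ||| 2 ^ 7 : ℕ) <<< 1720).testBit i = true := h
  rw [Nat.testBit_shiftLeft, Nat.testBit_or, Nat.testBit_or, Nat.testBit_two_pow,
    Nat.testBit_two_pow, Nat.testBit_two_pow] at h
  simp only [Bool.and_eq_true, Bool.or_eq_true, decide_eq_true_eq] at h
  omega

theorem low0 : Low N0 := fun i h => by rcases N0_bit h with h | h <;> omega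
theorem low1 : Low N1 := fun i h => by rcases N1_bit h with h | h | h <;> omega

/-- the conflict predicate on words of length 16 -/
def CC : List Tn → Prop
  | [] => False
  | .L :: w => Cf N0 .n 1 1 w
  | .S :: w => Cf N1 .e 2 0 w
  | .R :: w => Cf N0 .s 1 (-1) w

theorem D_spec (w : List Tn) (hw : w.length = 16) : Dok D w ∨ CC w := by
  rcases w with _ | ⟨t, w⟩
  · simp at hw
  have hv : w.length = 9 + 6 := by simpa using hw
  unfold D
  cases t
  · exact (gT_spec low0 9 .n 1 1 B0 1004 w hv (by norm_num)).imp_left (cmbT_ok .L w)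
  · exact (gT_spec low1 9 .e 2 0 B1 928 w hv (by norm_num)).imp_left (cmbT_ok .S w)
  · exact (gT_spec low0 9 .s 1 (-1) B2 844 w hv (by norm_num)).imp_left (cmbT_ok .R w)
/-! Packed arithmetic. -/
def slot (n i : ℕ) : ℕ := n / 2 ^ (24 * i) % 2 ^ 24

theorem slot_bit (n i j : ℕ) : (slot n i).testBit j = (decide (j < 24) && n.testBit (24 * i + j)) := by
  unfold slot
  rw [Nat.testBit_mod_two_pow, Nat.testBit_div_two_pow, add_comm j]

theorem slot_lt (n i : ℕ) : slot n i < 2 ^ 24 := Nat.mod_lt _ (by norm_num)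

theorem slot_land (x y i : ℕ) : slot (x &&& y) i = slot x i &&& slot y i := by
  apply Nat.eq_of_testBit_eq
  intro j
  rw [Nat.testBit_and, slot_bit, slot_bit, slot_bit, Nat.testBit_and]
  cases decide (j < 24) <;> simp

theorem slot_succ (n i : ℕ) : slot n (i + 1) = slot (n / 2 ^ 24) i := by
  unfold slot
  rw [Nat.div_div_eq_div_mul, ← pow_add]
  congr 3
  ring

def E (N : ℕ) (f : ℕ → ℕ) : ℕ := ∑ i ∈ Finset.range N, f i * 2 ^ (24 * i)

theorem E_succ (N : ℕ) (f : ℕ → ℕ) : E (N + 1) f = 2 ^ 24 * E N (fun i => f (i + 1)) + f 0 := by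
  unfold E
  rw [Finset.sum_range_succ', Finset.mul_sum, mul_zero, pow_zero, mul_one]
  have : ∀ i ∈ Finset.range N, f (i + 1) * 2 ^ (24 * (i + 1)) = 2 ^ 24 * (f (i + 1) * 2 ^ (24 * i)) := by
    intro i _
    rw [mul_add, pow_add, mul_one]; ring
  rw [Finset.sum_congr rfl this]

theorem E_inj (N : ℕ) : ∀ (f g : ℕ → ℕ), (∀ i < N, f i < 2 ^ 24) → (∀ i < N, g i < 2 ^ 24) →
    E N f = E N g → ∀ i < N, f i = g i := by
  induction N with
  | zero => intro f g _ _ _ i hi; omega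
  | succ N ih =>
    intro f g hf hg h i hi
    rw [E_succ, E_succ] at h
    have h1 := hf 0 (by omega)
    have h2 := hg 0 (by omega)
    rcases i with _ | i
    · omega
    · exact ih (fun i => f (i + 1)) (fun i => g (i + 1)) (fun i hi => hf _ (by omega))
        (fun i hi => hg _ (by omega)) (by omega) i (by omega)

theorem E_slot (N : ℕ) : ∀ n : ℕ, n < 2 ^ (24 * N) → n = E N (slot n) := by
  induction N with
  | zero => intro n hn; simp [E] at *; omega
  | succ N ih =>
    intro n hn
    rw [E_succ]
    have : n / 2 ^ 24 < 2 ^ (24 * N) := by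
      rw [Nat.div_lt_iff_lt_mul (by norm_num), ← pow_add]; exact hn
    have h := ih _ this
    have e : (fun i => slot n (i + 1)) = slot (n / 2 ^ 24) := by
      funext i; exact slot_succ n i
    rw [e, ← h]
    have : slot n 0 = n % 2 ^ 24 := by simp [slot]
    rw [this]; omega

theorem E_add (N : ℕ) (f g : ℕ → ℕ) : E N f + E N g = E N (fun i => f i + g i) := by
  unfold E
  rw [← Finset.sum_add_distrib]
  exact Finset.sum_congr rfl fun i _ => by ring

theorem E_mul (N c : ℕ) (f : ℕ → ℕ) : c * E N f = E N (fun i => c * f i) := by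
  unfold E
  rw [Finset.mul_sum]
  exact Finset.sum_congr rfl fun i _ => by ring

theorem E_lt (N : ℕ) : ∀ (f : ℕ → ℕ), (∀ i < N, f i < 2 ^ 24) → E N f < 2 ^ (24 * N) := by
  induction N with
  | zero => intro f _; simp [E]
  | succ N ih =>
    intro f hf
    have h1 := ih (fun i => f (i + 1)) (fun i hi => hf _ (by omega))
    have h2 := hf 0 (by omega)
    rw [E_succ, mul_add, pow_add, mul_one]
    nlinarith

theorem rp_E (N c : ℕ) : rp N 24 c = E N (fun _ => c) := by
  show c * ((2 ^ (24 * N) - 1) / (2 ^ 24 - 1)) = _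
  rw [pow_mul, ← Nat.geomSum_eq (by norm_num)]
  unfold E
  rw [Finset.mul_sum]
  exact Finset.sum_congr rfl fun i _ => by rw [pow_mul]

theorem slot_E (N : ℕ) (f : ℕ → ℕ) (hf : ∀ i < N, f i < 2 ^ 24) (i : ℕ) (hi : i < N) :
    slot (E N f) i = f i :=
  E_inj N _ _ (fun i _ => slot_lt _ i) hf (E_slot N _ (E_lt N f hf)).symm i hi

theorem land_rp (N X c : ℕ) (hc : c < 2 ^ 24) :
    X &&& rp N 24 c = E N (slot (X &&& rp N 24 c)) ∧
    ∀ i < N, slot (X &&& rp N 24 c) i = slot X i &&& c := by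
  constructor
  · apply E_slot
    refine lt_of_le_of_lt Nat.and_le_right ?_
    rw [rp_E]
    exact E_lt _ _ fun _ _ => hc
  · intro i hi
    rw [slot_land, rp_E, slot_E _ _ (fun _ _ => hc) i hi]

/-- value of a weight tree at a word -/
def val : T → List Tn → ℕ
  | .u n, _ => n
  | .b n, w => slot n (idx w)
  | .node _ _ _, [] => 0
  | .node l _ _, .L :: w => val l w
  | .node _ s _, .S :: w => val s w
  | .node _ _ r, .R :: w => val r w

theorem blk_ok {v : T} (h : ok v 0 = true) : ∃ f : ℕ → ℕ, (∀ i < 729, f i ≤ 65535) ∧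
    blk v = E 729 f ∧ ∀ w : List Tn, val v w = f (idx w) := by
  cases v with
  | u n =>
    have h : Nat.ble n 65535 = true := h
    refine ⟨fun _ => n, fun _ _ => Nat.le_of_ble_eq_true h, ?_, fun _ => rfl⟩
    show n * ones = _
    unfold ones
    rw [rp_E, E_mul]; simp
  | b n =>
    have h : (and (Nat.beq 0 0) (Nat.beq (Nat.land n lo16) n)) = true := h
    rw [Bool.and_eq_true] at h
    have h2 : n &&& rp 729 24 65535 = n := Nat.eq_of_beq_eq_true h.2
    obtain ⟨h3, h4⟩ := land_rp 729 n 65535 (by norm_num)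
    rw [h2] at h3 h4
    exact ⟨slot n, fun i hi => by rw [h4 i hi]; exact Nat.and_le_right, h3, fun _ => rfl⟩
  | node l s r => exact absurd h (by simp [ok])

theorem le_of_bits {x y : ℕ} (h : ∀ j, x.testBit j = true → y.testBit j = true) : x ≤ y := by
  have : x &&& y = x := by
    apply Nat.eq_of_testBit_eq
    intro j
    rw [Nat.testBit_and]
    have := h j
    cases hx : x.testBit j <;> simp_all
  rw [← this]; exact Nat.and_le_right

/-! The spreading pipeline. -/
def PP (t i : ℕ) : ℕ := i / 3 ^ (t + 1) * 3 ^ (t + 2) + i % 3 ^ (t + 1)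

theorem sg_bit {m0 m1 m2 X a P j : ℕ} (r : ℕ) (hr : r < 3)
    (hm : slot (if r = 0 then m0 else if r = 1 then m1 else m2) P = 2 ^ 24 - 1) (hj : j < 24)
    (h : X.testBit (24 * P + j) = true) :
    (sg m0 m1 m2 a X).testBit (24 * P + r * a + j) = true := by
  have hb : (if r = 0 then m0 else if r = 1 then m1 else m2).testBit (24 * P + j) = true := by
    have := slot_bit (if r = 0 then m0 else if r = 1 then m1 else m2) P j
    rw [hm, Nat.testBit_two_pow_sub_one] at this
    simpa [hj] using this.symm
  show ((X &&& m0) ||| ((X &&& m1) <<< a ||| (X &&& m2) <<< (a + a))).testBit _ = true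
  simp only [Nat.testBit_or, Nat.testBit_shiftLeft, Nat.testBit_and]
  rcases r with _ | _ | _ | r
  · simp at hb ⊢
    simp [h, hb]
  · simp at hb ⊢
    right; left
    refine ⟨by omega, ?_⟩
    rw [show 24 * P + a + j - a = 24 * P + j by omega]
    exact ⟨h, hb⟩
  · simp at hb ⊢
    right; right
    refine ⟨by omega, ?_⟩
    rw [show 24 * P + 2 * a + j - (a + a) = 24 * P + j by omega]
    exact ⟨h, hb⟩
  · omega

def mchk (m0 m1 m2 t : ℕ) : Prop := ∀ i < 243,
  (if i / 3 ^ t % 3 = 0 then m0 else if i / 3 ^ t % 3 = 1 then m1 else m2)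
    / 2 ^ (24 * PP t i) % 2 ^ 24 = 2 ^ 24 - 1
instance (m0 m1 m2 t : ℕ) : Decidable (mchk m0 m1 m2 t) := by unfold mchk; infer_instance

theorem mk4_ok : mchk mk40 mk41 mk42 4 := by decide +kernel
theorem mk3_ok : mchk mk30 mk31 mk32 3 := by decide +kernel
theorem mk2_ok : mchk mk20 mk21 mk22 2 := by decide +kernel
theorem mk1_ok : mchk mk10 mk11 mk12 1 := by decide +kernel
theorem mk0_ok : mchk mk00 mk01 mk02 0 := by decide +kernel

theorem stage {m0 m1 m2 t a i j X Q : ℕ} (hm : mchk m0 m1 m2 t) (hi : i < 243) (hj : j < 24)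
    (hQ : 24 * Q = 24 * PP t i + (i / 3 ^ t % 3) * a)
    (h : X.testBit (24 * PP t i + j) = true) :
    (sg m0 m1 m2 a X).testBit (24 * Q + j) = true := by
  rw [hQ]
  exact sg_bit _ (Nat.mod_lt _ (by norm_num)) (hm i hi) hj h

theorem pipe_bit {e S i q j : ℕ} (hi : i < 243) (hq : q < 3) (hj : j < 24)
    (h : S.testBit (e + (24 * i + j)) = true) :
    (pipe e S).testBit (24 * (3 * i + q) + j) = true := by
  have h5 : (Nat.shiftRight S e).testBit (24 * PP 4 i + j) = true := by
    show (S >>> e).testBit _ = true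
    rw [Nat.testBit_shiftRight]
    have : PP 4 i = i := by unfold PP; norm_num; omega
    rw [this]; exact h
  have h4 := stage (a := 3888) (Q := PP 3 i) mk4_ok hi hj (by unfold PP; norm_num; omega) h5
  have h3 := stage (a := 1296) (Q := PP 2 i) mk3_ok hi hj (by unfold PP; norm_num; omega) h4
  have h2 := stage (a := 432) (Q := PP 1 i) mk2_ok hi hj (by unfold PP; norm_num; omega) h3
  have h1 := stage (a := 144) (Q := PP 0 i) mk1_ok hi hj (by unfold PP; norm_num; omega) h2
  have h0 := stage (a := 48) (Q := 3 * i) mk0_ok hi hj (by unfold PP; norm_num; omega) h1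
  unfold pipe bc
  change (spread (Nat.shiftRight S e)).testBit _ = true at h0
  generalize spread (Nat.shiftRight S e) = X at *
  show (X ||| (X <<< 24 ||| X <<< 48)).testBit _ = true
  simp only [Nat.testBit_or, Nat.testBit_shiftLeft]
  have hq' : q = 0 ∨ q = 1 ∨ q = 2 := by omega
  rcases hq' with rfl | rfl | rfl
  · simp [h0]
  · rw [show 24 * (3 * i + 1) + j - 24 = 24 * (3 * i) + j by omega, h0]
    simp; right; left; omega
  · rw [show 24 * (3 * i + 2) + j - 48 = 24 * (3 * i) + j by omega, h0]
    simp; right; right; omega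

theorem bck_spec {m e : ℕ} {v a b c : T} (p : Tn) (he : e = 5832 * dig p)
    (hv : ok v 0 = true) (ha : ok a 0 = true) (hb : ok b 0 = true) (hc : ok c 0 = true)
    (h : bck m e v a b c = true) (w : List Tn) (hw : w.length = 5) (l : Tn)
    (hm : ∀ j < 24, m.testBit (24 * (3 * idx w + dig l) + j) = true)
    (W : List Tn) (hW : idx W = 3 * idx w + dig l) :
    42 * (val a (p :: w) + val b (p :: w) + val c (p :: w)) + 1 ≤ 115 * val v W := by
  obtain ⟨fv, bv, ev, vv⟩ := blk_ok hv
  obtain ⟨fa, ba, ea, va⟩ := blk_ok ha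
  obtain ⟨fb, bb, eb, vb⟩ := blk_ok hb
  obtain ⟨fc, bc, ec, vc⟩ := blk_ok hc
  have hi : idx w < 243 := by have := idx_lt w; rw [hw] at this; simpa using this
  have hl : dig l < 3 := by cases l <;> simp [dig]
  have hp : dig p < 3 := by cases p <;> simp [dig]
  have hk : idx (p :: w) = 243 * dig p + idx w := by simp only [idx, hw]; norm_num; ring
  set k := 243 * dig p + idx w with hkd
  have hk' : k < 729 := by omega
  rw [vv, va, vb, vc, hW, hk]
  set i := 3 * idx w + dig l with hid
  have hi' : i < 729 := by omega
  clear_value i k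
  obtain ⟨S, hS⟩ : ∃ S, S = Nat.add (Nat.add (blk a) (blk b)) (blk c) := ⟨_, rfl⟩
  have hSE : S = E 729 (fun i => fa i + fb i + fc i) := by
    rw [hS]
    show blk a + blk b + blk c = _
    rw [ea, eb, ec, E_add, E_add]
  have hSk : slot S k = fa k + fb k + fc k := by
    rw [hSE]
    refine slot_E _ _ (fun i hi => ?_) k hk'
    have := ba i hi; have := bb i hi; have := bc i hi
    show _ < 16777216
    omega
  obtain ⟨A, hA⟩ : ∃ A, A = (pipe e S &&& m) &&& rp 729 24 262143 := ⟨_, rfl⟩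
  obtain ⟨M, hM⟩ : ∃ M, M = m &&& rp 729 24 1 := ⟨_, rfl⟩
  have hbk : (and (Nat.ble (42 * A + M) (115 * blk v))
      (Nat.beq (Nat.land (Nat.sub (115 * blk v) (42 * A + M)) lo22)
        (Nat.sub (115 * blk v) (42 * A + M)))) = true := by
    rw [hA, hM, Nat.land_assoc, hS]
    exact h
  rw [Bool.and_eq_true] at hbk
  have hle := Nat.le_of_ble_eq_true hbk.1
  obtain ⟨D, hD⟩ : ∃ D, D = 115 * blk v - (42 * A + M) := ⟨_, rfl⟩
  have hD2 : D &&& rp 729 24 4194303 = D := by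
    rw [hD]; exact Nat.eq_of_beq_eq_true hbk.2
  obtain ⟨D3, D4⟩ := land_rp 729 D 4194303 (by norm_num)
  rw [hD2] at D3 D4
  obtain ⟨A3, A4⟩ := land_rp 729 (pipe e S &&& m) 262143 (by norm_num)
  rw [← hA] at A3 A4
  obtain ⟨M3, M4⟩ := land_rp 729 m 1 (by norm_num)
  rw [← hM] at M3 M4
  have heq : E 729 (fun i => slot D i + (42 * slot A i + slot M i)) = E 729 (fun i => 115 * fv i) := by
    rw [← E_add, ← E_add, ← E_mul, ← E_mul, ← D3, ← A3, ← M3, ← ev, hD]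
    omega
  have hsl := E_inj 729 _ _ (fun i hi => by
      have h1 : slot D i ≤ 4194303 := by rw [D4 i hi]; exact Nat.and_le_right
      have h2 : slot A i ≤ 262143 := by rw [A4 i hi]; exact Nat.and_le_right
      have h3 : slot M i ≤ 1 := by rw [M4 i hi]; exact Nat.and_le_right
      show _ < 16777216
      omega) (fun i hi => by
      have := bv i hi
      show _ < 16777216
      omega) heq i hi'
  have hmi : slot m i = 2 ^ 24 - 1 := by
    apply Nat.eq_of_testBit_eq
    intro j
    rw [slot_bit, Nat.testBit_two_pow_sub_one]
    by_cases hj : j < 24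
    · simp [hj, hm j hj]
    · simp [hj]
  have hMi : slot M i = 1 := by rw [M4 i hi', hmi]; decide
  have hAi : fa k + fb k + fc k ≤ slot A i := by
    rw [← hSk]
    apply le_of_bits
    intro j hj
    have hj18 : j < 18 := by
      by_contra hc'
      have : slot S k < 2 ^ j := by
        refine lt_of_lt_of_le ?_ (Nat.pow_le_pow_right (by norm_num) (not_lt.mp hc'))
        rw [hSk]
        have := ba k hk'; have := bb k hk'; have := bc k hk'
        show _ < 262144
        omega
      rw [Nat.testBit_lt_two_pow this] at hj
      exact absurd hj (by simp)
    rw [A4 i hi', slot_land, hmi]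
    rw [slot_bit] at hj
    have hj' : S.testBit (24 * k + j) = true := by
      rw [Bool.and_eq_true] at hj; exact hj.2
    have hp : (pipe e S).testBit (24 * i + j) = true := by
      rw [hid]
      refine pipe_bit hi hl (by omega) ?_
      rw [he, show 5832 * dig p + (24 * idx w + j) = 24 * k + j by omega]
      exact hj'
    rw [Nat.testBit_and, Nat.testBit_and, slot_bit, hp,
      show (262143 : ℕ) = 2 ^ 18 - 1 by norm_num, Nat.testBit_two_pow_sub_one,
      Nat.testBit_two_pow_sub_one]
    simp [hj18]
    omega
  omega
noncomputable def acc : Tn → T → T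
  | .L => T.L | .S => T.S | .R => T.R

theorem acc_v (t : Tn) (v : T) (k : ℕ) (h : ok v (k + 1) = true) :
    ok (acc t v) k = true ∧ ∀ w, val v (t :: w) = val (acc t v) w := by
  cases v with
  | u n => cases t <;> exact ⟨h, fun w => rfl⟩
  | b n =>
    exfalso
    have h : (and (Nat.beq (k + 1) 0) (Nat.beq (Nat.land n lo16) n)) = true := h
    rw [Bool.and_eq_true] at h
    exact absurd (Nat.eq_of_beq_eq_true h.1) (by omega)
  | node l s r =>
    have h : and (ok l k) (and (ok s k) (ok r k)) = true := h
    rw [Bool.and_eq_true, Bool.and_eq_true] at h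
    cases t
    · exact ⟨h.1, fun w => rfl⟩
    · exact ⟨h.2.1, fun w => rfl⟩
    · exact ⟨h.2.2, fun w => rfl⟩

theorem acc_0 (t : Tn) (v : T) (h : ok v 0 = true) : acc t v = v := by
  cases v with
  | u n => cases t <;> rfl
  | b n => cases t <;> rfl
  | node l s r => exact absurd h (by simp [ok])

def aval (k : ℕ) (a : T) (p : Tn) (w : List Tn) : ℕ :=
  if k = 0 then val a (p :: w.take 5) else val a (w.take (k + 5))

theorem acc_a (t p : Tn) (a : T) (k : ℕ) (h : ok a (k + 1 - 1) = true) (w : List Tn) :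
    ok (acc t a) (k - 1) = true ∧ aval (k + 1) a p (t :: w) = aval k (acc t a) t w := by
  rcases k with _ | k
  · rw [acc_0 t a h]
    exact ⟨h, rfl⟩
  · have := acc_v t a k h
    refine ⟨this.1, ?_⟩
    show val a (t :: w.take (k + 1 + 5)) = val (acc t a) (w.take (k + 1 + 5))
    exact this.2 _

theorem isU_val {v : T} (h : isU v = true) (w : List Tn) : val v w = uv v := by
  cases v with
  | u n => rfl
  | b n => exact absurd h (by simp [isU])
  | node l s r => exact absurd h (by simp [isU])

theorem isU_aval {v : T} (h : isU v = true) (k : ℕ) (p : Tn) (w : List Tn) : aval k v p w = uv v := by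
  unfold aval
  split_ifs <;> exact isU_val h _

theorem idx_snoc (w : List Tn) (l : Tn) : idx (w ++ [l]) = 3 * idx w + dig l := by
  induction w with
  | nil => simp [idx]
  | cons t w ih =>
    simp only [List.cons_append, idx, ih, List.length_append, List.length_cons, List.length_nil,
      pow_succ]
    ring

theorem split6 (w : List Tn) (h : w.length = 6) : ∃ l, w = w.take 5 ++ [l] := by
  match w, h with
  | [_, _, _, _, _, l], _ => exact ⟨l, rfl⟩

theorem top_on (i : ℕ) (hi : i < 729) : ∀ j < 24, top.testBit (24 * i + j) = true := by
  have e : top = full 6 := by decide +kernel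
  rw [e]
  exact full_on 6 i (by simpa using hi)

theorem blk_case {m e : ℕ} {v a b c : T} (p : Tn) (he : e = 5832 * dig p)
    (hv : ok v 0 = true) (ha : ok a 0 = true) (hb : ok b 0 = true) (hc : ok c 0 = true)
    (h : bck m e v a b c = true) (w : List Tn) (hw : w.length = 6) (hm : AllOn m (idx w)) :
    42 * (aval 0 a p w + aval 0 b p w + aval 0 c p w) + 1 ≤ 115 * val v w := by
  obtain ⟨l, hl⟩ := split6 w hw
  have hi : idx w = 3 * idx (w.take 5) + dig l := by rw [← idx_snoc, ← hl]
  exact bck_spec p he hv ha hb hc h (w.take 5) (by simp [hw]) l (by rw [← hi]; exact hm) w hi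

theorem chk_spec (t : T) : ∀ (k e : ℕ) (v a b c : T) (p : Tn) (w : List Tn),
    chk t k e v a b c = true → ok v k = true → ok a (k - 1) = true → ok b (k - 1) = true →
    ok c (k - 1) = true → e = 5832 * dig p → w.length = k + 6 → Dok t w →
    42 * (aval k a p w + aval k b p w + aval k c p w) + 1 ≤ 115 * val v w := by
  induction t with
  | u m =>
    intro k e v a b c p w h hv ha hb hc he hw hd
    rcases m with _ | m
    · exact absurd rfl hd
    have h : (@Bool.rec (fun _ => Bool) (and (Nat.beq k 0) (bck top e v a b c)) (Nat.ble (Nat.add (Nat.mul 42 (Nat.add (Nat.add (uv a) (uv b)) (uv c))) 1) (Nat.mul 115 (uv v))) (and (isU v) (and (isU a) (and (isU b) (isU c))))) = true := h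
    cases hU : (and (isU v) (and (isU a) (and (isU b) (isU c))))
    · rw [hU] at h
      have h : (and (Nat.beq k 0) (bck top e v a b c)) = true := h
      rw [Bool.and_eq_true] at h
      obtain rfl := Nat.eq_of_beq_eq_true h.1
      refine blk_case p he hv ha hb hc h.2 w hw (top_on _ ?_)
      have := idx_lt w
      rw [hw] at this
      simpa using this
    · rw [hU] at h
      simp only [Bool.and_eq_true] at hU
      obtain ⟨h1, h2, h3, h4⟩ := hU
      rw [isU_val h1, isU_aval h2, isU_aval h3, isU_aval h4]
      exact Nat.le_of_ble_eq_true h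
  | b m =>
    intro k e v a b c p w h hv ha hb hc he hw hd
    have h : (and (Nat.beq k 0) (bck m e v a b c)) = true := h
    rw [Bool.and_eq_true] at h
    obtain rfl := Nat.eq_of_beq_eq_true h.1
    exact blk_case p he hv ha hb hc h.2 w hw hd
  | node l s r il is ir =>
    intro k e v a b c p w h hv ha hb hc he hw hd
    rcases k with _ | k
    · exact absurd h (by simp [chk])
    have h : (and (chk l k 0 (T.L v) (T.L a) (T.L b) (T.L c)) (and (chk s k 5832 (T.S v) (T.S a) (T.S b) (T.S c)) (chk r k 11664 (T.R v) (T.R a) (T.R b) (T.R c)))) = true := h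
    rw [Bool.and_eq_true, Bool.and_eq_true] at h
    rcases w with _ | ⟨t, w⟩
    · exact absurd hd (by simp [Dok])
    have hv' := acc_v t v k hv
    have ha' := acc_a t p a k ha w
    have hb' := acc_a t p b k hb w
    have hc' := acc_a t p c k hc w
    rw [hv'.2, ha'.2, hb'.2, hc'.2]
    have hw' : w.length = k + 6 := by simp at hw; omega
    cases t
    · exact il k 0 _ _ _ _ .L w h.1 hv'.1 ha'.1 hb'.1 hc'.1 rfl hw' hd
    · exact is k 5832 _ _ _ _ .S w h.2.1 hv'.1 ha'.1 hb'.1 hc'.1 rfl hw' hd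
    · exact ir k 11664 _ _ _ _ .R w h.2.2 hv'.1 ha'.1 hb'.1 hc'.1 rfl hw' hd

/-- the weights satisfy the eigenvector inequality on allowed words -/
theorem weights (w : List Tn) (hw : w.length = 16) (h : ¬ CC w) :
    42 * (val V (.L :: w.take 15) + val V (.S :: w.take 15) + val V (.R :: w.take 15)) + 1
      ≤ 115 * val V w := by
  have hm := main_check
  rw [Bool.and_eq_true] at hm
  obtain ⟨hV, hc⟩ := hm
  have hd : Dok D w := (D_spec w hw).resolve_right h
  generalize V = V at *
  generalize D = D at *
  have h1 := acc_v .L V 9 hV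
  have h2 := acc_v .S V 9 hV
  have h3 := acc_v .R V 9 hV
  have := chk_spec D 10 0 V _ _ _ .L w hc hV h1.1 h2.1 h3.1 rfl hw hd
  rw [h1.2, h2.2, h3.2]
  exact this
/-! Counting allowed words. -/
def Good : List Tn → Prop
  | [] => True
  | c :: w => Good w ∧ (16 ≤ (c :: w).length → ¬ CC ((c :: w).take 16))

theorem Good.cc {w : List Tn} (h : Good w) (hw : 16 ≤ w.length) : ¬ CC (w.take 16) := by
  rcases w with _ | ⟨c, w⟩
  · simp at hw
  · exact h.2 hw

open Classical in
noncomputable def gl : ℕ → List (List Tn)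
  | 0 => [[]]
  | n + 1 => (gl n).flatMap (fun w => [Tn.L :: w, Tn.S :: w, Tn.R :: w].filter (fun u => Good u))

theorem mem_gl (w : List Tn) (h : Good w) : w ∈ gl w.length := by
  induction w with
  | nil => simp [gl]
  | cons c w ih =>
    simp only [List.length_cons, gl, List.mem_flatMap]
    refine ⟨w, ih h.1, ?_⟩
    rw [List.mem_filter]
    refine ⟨?_, by simpa using h⟩
    cases c <;> simp

theorem gl_good (n : ℕ) : ∀ w ∈ gl n, w.length = n ∧ Good w := by
  induction n with
  | zero => intro w hw; simp [gl] at hw; subst hw; simp [Good]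
  | succ n ih =>
    intro w hw
    simp only [gl, List.mem_flatMap] at hw
    obtain ⟨u, hu, hw⟩ := hw
    rw [List.mem_filter] at hw
    refine ⟨?_, by simpa using hw.2⟩
    have := (ih u hu).1
    have h := hw.1
    simp only [List.mem_cons, List.not_mem_nil, or_false] at h
    rcases h with rfl | rfl | rfl <;> simp [this]

noncomputable def wt (w : List Tn) : ℕ := val V (w.take 16)

theorem sum_filter_le (p : List Tn → Bool) (f : List Tn → ℕ) (l : List (List Tn)) :
    ((l.filter p).map f).sum ≤ (l.map f).sum := by
  induction l with
  | nil => simp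
  | cons a l ih =>
    rw [List.filter_cons]
    split_ifs <;> simp <;> omega

theorem wt_step (w : List Tn) (h : Good w) (hw : 16 ≤ w.length) :
    42 * (wt (.L :: w) + wt (.S :: w) + wt (.R :: w)) + 1 ≤ 115 * wt w := by
  have := weights (w.take 16) (by simp; omega) (h.cc hw)
  rw [List.take_take] at this
  exact this

noncomputable def sumw (l : List (List Tn)) : ℕ := (l.map wt).sum

theorem step_aux (p : List Tn → Bool) (l : List (List Tn)) (h : ∀ w ∈ l, Good w ∧ 16 ≤ w.length) :
    42 * sumw (l.flatMap (fun w => [Tn.L :: w, Tn.S :: w, Tn.R :: w].filter p)) ≤ 115 * sumw l := by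
  induction l with
  | nil => simp [sumw]
  | cons a l ih =>
    have h1 := ih (fun w hw => h w (by simp [hw]))
    have h2 := h a (by simp)
    have h3 := wt_step a h2.1 h2.2
    have h4 := sum_filter_le p wt [Tn.L :: a, Tn.S :: a, Tn.R :: a]
    simp only [List.map_cons, List.map_nil, List.sum_cons, List.sum_nil] at h4
    unfold sumw at *
    rw [List.flatMap_cons, List.map_append, List.sum_append, List.map_cons, List.sum_cons]
    omega

theorem len_le (l : List (List Tn)) (h : ∀ w ∈ l, Good w ∧ 16 ≤ w.length) : l.length ≤ sumw l := by
  induction l with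
  | nil => simp [sumw]
  | cons a l ih =>
    have h1 := ih (fun w hw => h w (by simp [hw]))
    have h2 := h a (by simp)
    have h3 := wt_step a h2.1 h2.2
    unfold sumw at *
    rw [List.map_cons, List.sum_cons, List.length_cons]
    omega

theorem gl_bound (n : ℕ) : 42 ^ n * (gl (n + 16)).length ≤ 115 ^ n * sumw (gl 16) := by
  have key : ∀ n, 42 ^ n * sumw (gl (n + 16)) ≤ 115 ^ n * sumw (gl 16) := by
    intro n
    induction n with
    | zero => simp
    | succ n ih =>
      have h := step_aux (fun u => @decide (Good u) (Classical.propDecidable _)) (gl (n + 16)) (fun w hw => by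
        obtain ⟨h1, h2⟩ := gl_good _ w hw
        exact ⟨h2, by omega⟩)
      have e : gl (n + 1 + 16) = (gl (n + 16)).flatMap (fun w => [Tn.L :: w, Tn.S :: w, Tn.R :: w].filter (fun u => @decide (Good u) (Classical.propDecidable _))) := by
        rw [show n + 1 + 16 = (n + 16) + 1 by ring, gl]
      rw [← e] at h
      calc 42 ^ (n + 1) * sumw (gl (n + 1 + 16)) = 42 ^ n * (42 * sumw (gl (n + 1 + 16))) := by ring
        _ ≤ 42 ^ n * (115 * sumw (gl (n + 16))) := Nat.mul_le_mul_left _ h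
        _ = 115 * (42 ^ n * sumw (gl (n + 16))) := by ring
        _ ≤ 115 * (115 ^ n * sumw (gl 16)) := Nat.mul_le_mul_left _ ih
        _ = _ := by ring
  refine le_trans (Nat.mul_le_mul_left _ (len_le _ fun w hw => ?_)) (key n)
  obtain ⟨h1, h2⟩ := gl_good _ w hw
  exact ⟨h2, by omega⟩
/-! From walks to words. -/
def opp : Dr → Dr | .e => .w | .n => .s | .w => .e | .s => .n
def tn : Dr → Dr → Tn
  | .e, .n => .L | .e, .s => .R
  | .n, .w => .L | .n, .e => .R
  | .w, .s => .L | .w, .n => .R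
  | .s, .e => .L | .s, .w => .R
  | _, _ => .S
def comp : Dr → Dr → Dr
  | .e, d => d
  | .n, d => turn d .L
  | .w, d => opp d
  | .s, d => turn d .R
def rx : Dr → ℤ → ℤ → ℤ
  | .e, p, _ => p | .n, _, q => -q | .w, p, _ => -p | .s, _, q => q
def ry : Dr → ℤ → ℤ → ℤ
  | .e, _, q => q | .n, p, _ => p | .w, _, q => -q | .s, p, _ => -p

theorem turn_tn (d d' : Dr) (h : d' ≠ opp d) : turn d (tn d d') = d' := by
  cases d <;> cases d' <;> first | rfl | exact absurd rfl h
theorem tn_S {d d' : Dr} (h : d' ≠ opp d) (hS : tn d d' = .S) : d' = d := by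
  cases d <;> cases d' <;> simp_all [tn, opp]
theorem turn_comp (A d : Dr) (t : Tn) : turn (comp A d) t = comp A (turn d t) := by
  cases A <;> cases d <;> cases t <;> rfl
theorem opp_opp (d : Dr) : opp (opp d) = d := by cases d <;> rfl
theorem dx_opp (d : Dr) : dx (opp d) = - dx d := by cases d <;> rfl
theorem dy_opp (d : Dr) : dy (opp d) = - dy d := by cases d <;> rfl
theorem dx_comp (A d : Dr) : dx (comp A d) = rx A (dx d) (dy d) := by cases A <;> cases d <;> rfl
theorem dy_comp (A d : Dr) : dy (comp A d) = ry A (dx d) (dy d) := by cases A <;> cases d <;> rfl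
theorem comp_e (A : Dr) : comp A .e = A := by cases A <;> rfl
theorem turn_inj {d d' : Dr} {t : Tn} (h : turn d t = turn d' t) : d = d' := by
  cases d <;> cases d' <;> cases t <;> simp_all [turn]
theorem opp_inj {d d' : Dr} (h : opp d = opp d') : d = d' := by
  rw [← opp_opp d, h, opp_opp]
theorem rx_add (A : Dr) (p q p' q' : ℤ) : rx A (p + p') (q + q') = rx A p q + rx A p' q' := by
  cases A <;> simp [rx] <;> ring
theorem ry_add (A : Dr) (p q p' q' : ℤ) : ry A (p + p') (q + q') = ry A p q + ry A p' q' := by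
  cases A <;> simp [ry] <;> ring

structure SD (n : ℕ) (x y : ℕ → ℤ) (a : ℕ → Dr) : Prop where
  x0 : x 0 = 0
  y0 : y 0 = 0
  sx : ∀ j < n, x (j + 1) = x j + dx (a j)
  sy : ∀ j < n, y (j + 1) = y j + dy (a j)
  e1 : ∀ i < n, ∀ j < n, i ≠ j → x i = x j → y i = y j → x (i + 1) = x (j + 1) →
    y (i + 1) = y (j + 1) → False
  e2 : ∀ i < n, ∀ j < n, i ≠ j → x i = x (j + 1) → y i = y (j + 1) → x (i + 1) = x j →
    y (i + 1) = y j → False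
  st : ∀ j, 0 < j → j < n → ∀ i ≤ n, i ≠ j → x i = x j → y i = y j → a j ≠ a (j - 1)

def tl (a : ℕ → Dr) (j : ℕ) : Tn := tn (opp (a j)) (opp (a (j - 1)))
def wd (a : ℕ → Dr) : ℕ → List Tn
  | 0 => []
  | m + 1 => tl a (m + 1) :: wd a m

theorem wd_len (a : ℕ → Dr) (m : ℕ) : (wd a m).length = m := by
  induction m with
  | zero => rfl
  | succ m ih => simp [wd, ih]

namespace SD
variable {n : ℕ} {x y : ℕ → ℤ} {a : ℕ → Dr}

theorem noU (h : SD n x y a) (i : ℕ) (hi : i + 1 < n) : opp (a i) ≠ opp (opp (a (i + 1))) := by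
  intro hc
  rw [opp_opp] at hc
  have h1 := h.sx i (by omega)
  have h2 := h.sy i (by omega)
  have h3 := h.sx (i + 1) (by omega)
  have h4 := h.sy (i + 1) (by omega)
  rw [← hc, dx_opp] at h3
  rw [← hc, dy_opp] at h4
  exact h.e2 i (by omega) (i + 1) (by omega) (by omega) (by omega) (by omega) (by omega) (by omega)

theorem tl_spec (h : SD n x y a) (i : ℕ) (hi : i + 1 < n) :
    turn (opp (a (i + 1))) (tl a (i + 1)) = opp (a i) :=
  turn_tn _ _ (h.noU i hi)

theorem tl_S (h : SD n x y a) (i : ℕ) (hi : i + 1 < n) (hS : tl a (i + 1) = .S) :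
    a (i + 1) = a i :=
  (opp_inj (tn_S (h.noU i hi) hS)).symm

theorem no_hit (h : SD n x y a) (m : ℕ) (hm : m < n) (N : ℕ)
    (hN : N = N0 ∨ (N = N1 ∧ 0 < m ∧ a m = a (m - 1))) (i : ℕ) (p q : ℤ) (d' : Dr)
    (hi : i + 1 < m) (hd : opp (a i) = comp (opp (a m)) d')
    (hx : x (i + 1) = x (m + 1) + rx (opp (a m)) p q)
    (hy : y (i + 1) = y (m + 1) + ry (opp (a m)) p q)
    (hp : -16 ≤ p ∧ p ≤ 16) (hq : -16 ≤ q ∧ q ≤ 16)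
    (hh : Hit N (tl a (i + 1)) d' p q) : False := by
  have hxi := h.sx i (by omega)
  have hyi := h.sy i (by omega)
  have hxm := h.sx m hm
  have hym := h.sy m hm
  have hdx : -dx (a i) = rx (opp (a m)) (dx d') (dy d') := by rw [← dx_opp, hd, dx_comp]
  have hdy : -dy (a i) = ry (opp (a m)) (dx d') (dy d') := by rw [← dy_opp, hd, dy_comp]
  have hAx : -dx (a m) = rx (opp (a m)) 1 0 := by rw [← dx_opp]; cases opp (a m) <;> rfl
  have hAy : -dy (a m) = ry (opp (a m)) 1 0 := by rw [← dy_opp]; cases opp (a m) <;> rfl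
  -- the three kinds of conflict
  have c1 : tl a (i + 1) = .S → p = 0 → q = 0 → False := by
    rintro hS rfl rfl
    refine h.st (i + 1) (by omega) (by omega) (m + 1) (by omega) (by omega) ?_ ?_
      (h.tl_S i (by omega) hS)
    · rw [hx]; cases opp (a m) <;> simp [rx]
    · rw [hy]; cases opp (a m) <;> simp [ry]
  have c2 : p = 0 → q = 0 → d' = .e → False := by
    rintro rfl rfl rfl
    have z1 : rx (opp (a m)) 0 0 = 0 := by cases opp (a m) <;> simp [rx]
    have z2 : ry (opp (a m)) 0 0 = 0 := by cases opp (a m) <;> simp [ry]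
    change -dx (a i) = rx (opp (a m)) 1 0 at hdx
    change -dy (a i) = ry (opp (a m)) 1 0 at hdy
    exact h.e1 i (by omega) m hm (by omega) (by omega) (by omega) (by omega) (by omega)
  have c3 : p = 1 → q = 0 → d' = .w → False := by
    rintro rfl rfl rfl
    have z1 : rx (opp (a m)) (-1) 0 = - rx (opp (a m)) 1 0 := by cases opp (a m) <;> simp [rx]
    have z2 : ry (opp (a m)) (-1) 0 = - ry (opp (a m)) 1 0 := by cases opp (a m) <;> simp [ry]
    change -dx (a i) = rx (opp (a m)) (-1) 0 at hdx
    change -dy (a i) = ry (opp (a m)) (-1) 0 at hdy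
    exact h.e2 i (by omega) m hm (by omega) (by omega) (by omega) (by omega) (by omega)
  have c4 : (0 < m ∧ a m = a (m - 1)) → p + dx d' = 1 → q + dy d' = 0 → False := by
    rintro ⟨hm0, ha⟩ hp1 hq0
    have z1 := rx_add (opp (a m)) p q (dx d') (dy d')
    have z2 := ry_add (opp (a m)) p q (dx d') (dy d')
    rw [hp1, hq0] at z1 z2
    exact h.st m hm0 hm i (by omega) (by omega) (by omega) (by omega) ha
  obtain ⟨b, hb, hcase⟩ := hh
  have hb' : b = 1720 ∨ b = 1721 ∨ (b = 1727 ∧ (0 < m ∧ a m = a (m - 1))) := by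
    rcases hN with rfl | ⟨rfl, hh⟩
    · rcases N0_bit hb with h | h
      · exact Or.inl h
      · exact Or.inr (Or.inl h)
    · rcases N1_bit hb with h | h | h
      · exact Or.inl h
      · exact Or.inr (Or.inl h)
      · exact Or.inr (Or.inr ⟨h, hh⟩)
  clear hN hb hx hy hxi hyi hxm hym hdx hdy hAx hAy
  rcases hb' with rfl | rfl | ⟨rfl, hh⟩
  · rcases hcase with hc | hc | ⟨hS, hc⟩
    · cases d' <;> simp only [edge] at hc <;> omega
    · omega
    · exact c1 hS (by omega) (by omega)
  · rcases hcase with hc | hc | ⟨hS, hc⟩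
    · cases d' <;> simp only [edge] at hc
      · exact c2 (by omega) (by omega) rfl
      · omega
      · exact c3 (by omega) (by omega) rfl
      · omega
    · omega
    · omega
  · rcases hcase with hc | hc | ⟨hS, hc⟩
    · cases d' <;> simp only [edge] at hc <;> simp only [dx, dy] at * <;> omega
    · refine c4 hh ?_ ?_ <;> cases d' <;> simp only [dx, dy] at * <;> omega
    · omega

theorem trace (h : SD n x y a) (m : ℕ) (hm : m < n) (N : ℕ)
    (hN : N = N0 ∨ (N = N1 ∧ 0 < m ∧ a m = a (m - 1))) : ∀ (k i : ℕ) (p q : ℤ) (d : Dr),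
    i < m → opp (a i) = comp (opp (a m)) d →
    x i = x (m + 1) + rx (opp (a m)) p q → y i = y (m + 1) + ry (opp (a m)) p q →
    (-(m + 1 - i : ℤ) ≤ p ∧ p ≤ m + 1 - i) → (-(m + 1 - i : ℤ) ≤ q ∧ q ≤ m + 1 - i) →
    m + 1 - i + k ≤ 17 → ¬ Cf N d p q ((wd a i).take k) := by
  intro k
  induction k with
  | zero => intros; simp [Cf]
  | succ k ih =>
    intro i p q d hi hd hx hy hp hq hk
    rcases i with _ | i
    · simp [wd, Cf]
    rw [wd, List.take_succ_cons, Cf]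
    have hd' : opp (a i) = comp (opp (a m)) (turn d (tl a (i + 1))) := by
      rw [← turn_comp, ← hd, h.tl_spec i (by omega)]
    rintro (hh | hh)
    · exact h.no_hit m hm N hN i p q _ hi hd' hx hy (by omega) (by omega) hh
    · generalize turn d (tl a (i + 1)) = d' at *
      have hdx : -dx (a i) = rx (opp (a m)) (dx d') (dy d') := by rw [← dx_opp, hd', dx_comp]
      have hdy : -dy (a i) = ry (opp (a m)) (dx d') (dy d') := by rw [← dy_opp, hd', dy_comp]
      have hxi := h.sx i (by omega)
      have hyi := h.sy i (by omega)
      have b1 : -1 ≤ dx d' ∧ dx d' ≤ 1 := by cases d' <;> simp [dx]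
      have b2 : -1 ≤ dy d' ∧ dy d' ≤ 1 := by cases d' <;> simp [dy]
      refine ih i _ _ d' (by omega) hd' ?_ ?_ ?_ ?_ (by omega) hh
      · rw [rx_add]; omega
      · rw [ry_add]; omega
      · push_cast at *; omega
      · push_cast at *; omega

theorem noCC (h : SD n x y a) (m : ℕ) (hm : m + 1 < n) : ¬ CC ((wd a (m + 1)).take 16) := by
  rw [wd, List.take_succ_cons]
  have hd' : opp (a m) = comp (opp (a (m + 1))) (turn .e (tl a (m + 1))) := by
    rw [← turn_comp, comp_e, h.tl_spec m (by omega)]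
  have hS := h.tl_S m hm
  have hxi := h.sx m (by omega)
  have hyi := h.sy m (by omega)
  have hxm := h.sx (m + 1) (by omega)
  have hym := h.sy (m + 1) (by omega)
  have hAx : -dx (a (m + 1)) = rx (opp (a (m + 1))) 1 0 := by
    rw [← dx_opp]; cases opp (a (m + 1)) <;> rfl
  have hAy : -dy (a (m + 1)) = ry (opp (a (m + 1))) 1 0 := by
    rw [← dy_opp]; cases opp (a (m + 1)) <;> rfl
  have key : ∀ N, (N = N0 ∨ (N = N1 ∧ 0 < m + 1 ∧ a (m + 1) = a m)) →
      ¬ Cf N (turn .e (tl a (m + 1))) (1 + dx (turn .e (tl a (m + 1))))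
        (0 + dy (turn .e (tl a (m + 1)))) ((wd a m).take 15) := by
    intro N hN
    generalize turn Dr.e (tl a (m + 1)) = d' at *
    have hdx : -dx (a m) = rx (opp (a (m + 1))) (dx d') (dy d') := by rw [← dx_opp, hd', dx_comp]
    have hdy : -dy (a m) = ry (opp (a (m + 1))) (dx d') (dy d') := by rw [← dy_opp, hd', dy_comp]
    have b1 : -1 ≤ dx d' ∧ dx d' ≤ 1 := by cases d' <;> simp [dx]
    have b2 : -1 ≤ dy d' ∧ dy d' ≤ 1 := by cases d' <;> simp [dy]
    refine h.trace (m + 1) hm N hN 15 m _ _ d' (by omega) hd' ?_ ?_ ?_ ?_ (by omega)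
    · rw [rx_add]; omega
    · rw [ry_add]; omega
    · push_cast; omega
    · push_cast; omega
  cases ht : tl a (m + 1) <;> rw [ht] at key hS
  · exact key N0 (Or.inl rfl)
  · exact key N1 (Or.inr ⟨rfl, by omega, hS rfl⟩)
  · exact key N0 (Or.inl rfl)

theorem good (h : SD n x y a) : ∀ m, m < n → Good (wd a m) := by
  intro m
  induction m with
  | zero => intro _; trivial
  | succ m ih =>
    intro hm
    exact ⟨ih (by omega), fun _ => h.noCC m hm⟩

theorem inj {x' y' : ℕ → ℤ} {a' : ℕ → Dr} {m : ℕ} (h : SD (m + 1) x y a) (h' : SD (m + 1) x' y' a')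
    (h0 : a 0 = a' 0) (hw : wd a m = wd a' m) : ∀ j ≤ m + 1, x j = x' j ∧ y j = y' j := by
  have ht : ∀ k, k ≤ m → wd a k = wd a' k := by
    have aux : ∀ i k, wd a (k + i) = wd a' (k + i) → wd a k = wd a' k := by
      intro i
      induction i with
      | zero => intro k hk; exact hk
      | succ i ih => intro k hk; exact ih k (List.cons.inj hk).2
    intro k hk
    exact aux (m - k) k (by rw [Nat.add_sub_cancel' hk]; exact hw)
  have ha : ∀ j ≤ m, a j = a' j := by
    intro j
    induction j with
    | zero => intro _; exact h0
    | succ j ih =>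
      intro hj
      have e := ht (j + 1) hj
      rw [wd, wd] at e
      have e1 := (List.cons.inj e).1
      have s1 := h.tl_spec j (by omega)
      have s2 := h'.tl_spec j (by omega)
      rw [← e1, ← ih (by omega), ← s1] at s2
      exact (opp_inj (turn_inj s2)).symm
  intro j
  induction j with
  | zero => intro _; rw [h.x0, h.y0, h'.x0, h'.y0]; exact ⟨rfl, rfl⟩
  | succ j ih =>
    intro hj
    rw [h.sx j (by omega), h.sy j (by omega), h'.sx j (by omega), h'.sy j (by omega),
      ha j (by omega), (ih (by omega)).1, (ih (by omega)).2]
    exact ⟨rfl, rfl⟩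

end SD
def code : Dr → Fin 4 | .e => 0 | .n => 1 | .w => 2 | .s => 3
theorem code_inj {d d' : Dr} (h : code d = code d') : d = d' := by
  cases d <;> cases d' <;> simp_all [code]

theorem step_dir (s : Fin 2 → ℤ) (h : unitStep 2 s) : ∃ d : Dr, s 0 = dx d ∧ s 1 = dy d := by
  obtain ⟨i, h⟩ := h
  fin_cases i
  · rcases h with h | h
    · exact ⟨.e, by simp [h, dx], by simp [h, dy]⟩
    · exact ⟨.w, by simp [h, dx], by simp [h, dy]⟩
  · rcases h with h | h
    · exact ⟨.n, by simp [h, dx], by simp [h, dy]⟩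
    · exact ⟨.s, by simp [h, dx], by simp [h, dy]⟩

/-- extension of a walk to all times -/
def ext (n : ℕ) (w : Fin (n + 1) → Fin 2 → ℤ) (c : Fin 2) (j : ℕ) : ℤ :=
  w ⟨min j n, by omega⟩ c

theorem ext_eq (n : ℕ) (w : Fin (n + 1) → Fin 2 → ℤ) (c : Fin 2) (j : ℕ) (hj : j < n + 1) :
    ext n w c j = w ⟨j, hj⟩ c := by
  unfold ext
  congr 2
  omega

theorem pt_eq {n : ℕ} {w : Fin (n + 1) → Fin 2 → ℤ} {i j : ℕ} (hi : i < n + 1) (hj : j < n + 1)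
    (h0 : ext n w 0 i = ext n w 0 j) (h1 : ext n w 1 i = ext n w 1 j) :
    w ⟨i, hi⟩ = w ⟨j, hj⟩ := by
  rw [ext_eq n w _ i hi, ext_eq n w _ j hj] at h0 h1
  funext c
  fin_cases c
  · exact h0
  · exact h1

theorem sow_data (n : ℕ) (w : Fin (n + 1) → Fin 2 → ℤ) (h : IsSOW n w) :
    ∃ a : ℕ → Dr, SD n (ext n w 0) (ext n w 1) a := by
  obtain ⟨⟨h0, hs⟩, he, hst⟩ := h
  have : ∀ j, ∃ d : Dr, j < n → ext n w 0 (j + 1) = ext n w 0 j + dx d ∧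
      ext n w 1 (j + 1) = ext n w 1 j + dy d := by
    intro j
    by_cases hj : j < n
    · obtain ⟨d, h1, h2⟩ := step_dir _ (hs ⟨j, hj⟩)
      refine ⟨d, fun _ => ?_⟩
      rw [ext_eq n w _ j (by omega), ext_eq n w _ j (by omega), ext_eq n w _ (j + 1) (by omega),
        ext_eq n w _ (j + 1) (by omega), ← h1, ← h2]
      simp only [Pi.sub_apply, Fin.succ_mk, Fin.castSucc_mk]
      constructor <;> ring
    · exact ⟨.e, fun h => absurd h hj⟩
  choose a ha using this
  refine ⟨a, ?_, ?_, fun j hj => (ha j hj).1, fun j hj => (ha j hj).2, ?_, ?_, ?_⟩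
  · rw [ext_eq n w _ 0 (by omega)]
    exact congrFun h0 0
  · rw [ext_eq n w _ 0 (by omega)]
    exact congrFun h0 1
  · intro i hi j hj hij h1 h2 h3 h4
    refine he ⟨i, hi⟩ ⟨j, hj⟩ (by simpa using hij) ?_
    rw [Sym2.eq_iff]
    left
    exact ⟨pt_eq (by omega) (by omega) h1 h2, pt_eq (by omega) (by omega) h3 h4⟩
  · intro i hi j hj hij h1 h2 h3 h4
    refine he ⟨i, hi⟩ ⟨j, hj⟩ (by simpa using hij) ?_
    rw [Sym2.eq_iff]
    right
    exact ⟨pt_eq (by omega) (by omega) h1 h2, pt_eq (by omega) (by omega) h3 h4⟩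
  · intro j hj0 hjn i hi hij h1 h2 hc
    have := hst j hj0 hjn ⟨⟨i, by omega⟩, hij, pt_eq (by omega) (by omega) h1 h2⟩
    rw [Fin.sum_univ_two] at this
    simp only [Pi.sub_apply] at this
    rw [← ext_eq n w 0, ← ext_eq n w 0, ← ext_eq n w 0, ← ext_eq n w 1, ← ext_eq n w 1,
      ← ext_eq n w 1, (ha j hjn).1, (ha j hjn).2] at this
    have q := ha (j - 1) (by omega)
    rw [Nat.sub_add_cancel hj0, ← hc] at q
    rw [q.1, q.2] at this
    cases hd : a j <;> simp [hd, dx, dy] at this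

theorem count_le (m : ℕ) : sowCount (m + 1) ≤ 4 * (gl m).length := by
  have : ∀ w : {w : Fin (m + 1 + 1) → Fin 2 → ℤ // IsSOW (m + 1) w},
      ∃ c : Fin 4 × Fin (gl m).length, ∃ a : ℕ → Dr,
        SD (m + 1) (ext _ w.1 0) (ext _ w.1 1) a ∧ code (a 0) = c.1 ∧ (gl m).get c.2 = wd a m := by
    intro w
    obtain ⟨a, ha⟩ := sow_data _ w.1 w.2
    have hg := mem_gl _ (ha.good m (by omega))
    rw [wd_len] at hg
    obtain ⟨i, hi⟩ := List.mem_iff_get.mp hg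
    exact ⟨(code (a 0), i), a, ha, rfl, hi⟩
  choose f hf using this
  have hinj : Function.Injective f := by
    intro w w' h
    obtain ⟨a, h1, h2, h3⟩ := hf w
    obtain ⟨a', h1', h2', h3'⟩ := hf w'
    rw [← h] at h2' h3'
    have := h1.inj h1' (code_inj (h2.trans h2'.symm)) (h3.symm.trans h3')
    apply Subtype.ext
    funext j c
    have hj := this j.1 (by omega)
    rw [ext_eq _ _ _ j.1 j.2, ext_eq _ _ _ j.1 j.2, ext_eq _ _ _ j.1 j.2, ext_eq _ _ _ j.1 j.2] at hj
    fin_cases c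
    · exact hj.1
    · exact hj.2
  have h := Nat.card_le_card_of_injective f hinj
  rw [Nat.card_prod, Nat.card_fin, Nat.card_fin] at h
  exact h

theorem count_bound : ∃ C : ℝ, 0 < C ∧ ∀ n ≥ 17, (sowCount n : ℝ) ≤ C * (115 / 42 : ℝ) ^ n := by
  refine ⟨4 * (sumw (gl 16) + 1), by positivity, fun n hn => ?_⟩
  obtain ⟨k, rfl⟩ : ∃ k, n = k + 16 + 1 := ⟨n - 17, by omega⟩
  have h1 := count_le (k + 16)
  have h2 := gl_bound k
  generalize sumw (gl 16) = s at *
  generalize (gl (k + 16)).length = l at *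
  have h1' : (sowCount (k + 16 + 1) : ℝ) ≤ 4 * l := by exact_mod_cast h1
  have h2' : (42 : ℝ) ^ k * l ≤ 115 ^ k * s := by exact_mod_cast h2
  have h3 : (l : ℝ) ≤ (115 / 42 : ℝ) ^ k * s := by
    rw [div_pow, div_mul_eq_mul_div, le_div_iff₀ (by positivity)]
    linarith
  have h4 : (115 / 42 : ℝ) ^ k ≤ (115 / 42 : ℝ) ^ (k + 16 + 1) :=
    pow_le_pow_right₀ (by norm_num) (by omega)
  have h5 : (0 : ℝ) ≤ s := Nat.cast_nonneg s
  have h6 : (0 : ℝ) < (115 / 42 : ℝ) ^ k := by positivity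
  nlinarith

theorem final : limsup (fun n : ℕ => (sowCount n : ℝ) ^ (1 / (n : ℝ))) atTop ≤ 2.73911 := by
  obtain ⟨C, hC, hb⟩ := count_bound
  have hlim : Tendsto (fun n : ℕ => C ^ (1 / (n : ℝ)) * (115 / 42 : ℝ)) atTop
      (nhds (C ^ (0 : ℝ) * (115 / 42))) := by
    apply Tendsto.mul_const
    exact ((Real.continuous_const_rpow hC.ne').tendsto 0).comp tendsto_one_div_atTop_nhds_zero_nat
  have hev : ∀ᶠ n : ℕ in atTop, C ^ (1 / (n : ℝ)) * (115 / 42 : ℝ) < 2.73911 := by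
    apply hlim.eventually_lt_const
    rw [Real.rpow_zero]; norm_num
  apply limsup_le_of_le
  · exact IsCoboundedUnder.of_frequently_ge (a := 0) (Eventually.frequently (Eventually.of_forall fun n => by positivity))
  · filter_upwards [hev, eventually_ge_atTop 17] with n hn hn17
    refine le_trans ?_ hn.le
    have hn0 : (n : ℝ) ≠ 0 := by positivity
    calc (sowCount n : ℝ) ^ (1 / (n : ℝ)) ≤ (C * (115 / 42 : ℝ) ^ n) ^ (1 / (n : ℝ)) :=
          Real.rpow_le_rpow (Nat.cast_nonneg _) (hb n hn17) (by positivity)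
      _ = C ^ (1 / (n : ℝ)) * (115 / 42 : ℝ) := by
          rw [Real.mul_rpow hC.le (by positivity), ← Real.rpow_natCast, ← Real.rpow_mul (by norm_num),
            mul_one_div_cancel hn0, Real.rpow_one]
end SOWc

theorem sow_connective_constant_upper_bound :
    limsup (fun n : ℕ => (sowCount n : ℝ) ^ (1 / (n : ℝ))) atTop ≤ 2.73911 :=
  SOWc.final
end

section
/- For all integers d, k with 2 ≤ k ≤ d and all n ≥ 1, the number of (d,k)-self-avoiding manifolds of k-area n satisfies c^SAM_{(d,k),n} ≤ C(d,k) · ((2k−1)^{2k−1}/(2k−2)^{2k−2})^n · (2(d−k)+1)^{n−1}, where C(d,k) is the binomial coefficient d choose k. -/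
open Filter

/-- A `k`-face of the hypercubic lattice `ℤ^d`: an orientation set `S ⊆ {1,…,d}`
together with a base vertex `v ∈ ℤ^d`. -/
abbrev Face (d : ℕ) := Finset (Fin d) × (Fin d → ℤ)

/-- The boundary `(k-1)`-edges of a `k`-face `(S, v)`: the `(k-1)`-faces
`(S \ {i}, v)` and `(S \ {i}, v + e_i)` for `i ∈ S`. -/
def faceEdges {d : ℕ} (f : Face d) : Finset (Face d) :=
  f.1.biUnion fun i =>
    {(f.1.erase i, f.2), (f.1.erase i, f.2 + Pi.single i 1)}

/-- Two faces are adjacent if they are distinct and share a common boundary edge. -/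
def FaceAdj {d : ℕ} (f g : Face d) : Prop :=
  f ≠ g ∧ ∃ e, e ∈ faceEdges f ∧ e ∈ faceEdges g

/-- A set of faces is connected with respect to adjacency. -/
def ConnectedFaces {d : ℕ} (M : Finset (Face d)) : Prop :=
  ∀ f ∈ M, ∀ g ∈ M, Relation.ReflTransGen (fun a b => a ∈ M ∧ b ∈ M ∧ FaceAdj a b) f g

/-- A `(d,k)`-self-avoiding manifold of `k`-area `n`: a connected set of `n` `k`-faces
such that every `(k-1)`-edge bounds at most two of its `k`-faces. -/
def IsSAM (d k n : ℕ) (M : Finset (Face d)) : Prop :=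
  M.card = n ∧ (∀ f ∈ M, f.1.card = k) ∧ ConnectedFaces M ∧
    ∀ e : Face d, (M.filter fun f => e ∈ faceEdges f).card ≤ 2

/-- A closed `(d,k)`-self-avoiding manifold: every boundary edge of every face
is shared by exactly two faces. -/
def IsClosedSAM (d k n : ℕ) (M : Finset (Face d)) : Prop :=
  IsSAM d k n M ∧ ∀ f ∈ M, ∀ e ∈ faceEdges f,
    (M.filter fun g => e ∈ faceEdges g).card = 2

/-- A `(d,k)`-fixed polyominoid of `k`-area `n`: a connected set of `n` `k`-faces. -/
def IsXD (d k n : ℕ) (M : Finset (Face d)) : Prop :=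
  M.card = n ∧ (∀ f ∈ M, f.1.card = k) ∧ ConnectedFaces M

/-- Translation of a face by a lattice vector. -/
def translateFace {d : ℕ} (t : Fin d → ℤ) (f : Face d) : Face d := (f.1, f.2 + t)

/-- Two sets of faces are translation-equivalent. -/
def TransEquiv {d : ℕ} (A B : Finset (Face d)) : Prop :=
  ∃ t : Fin d → ℤ, A.image (translateFace t) = B

/-- The number of `(d,k)`-self-avoiding manifolds of `k`-area `n`, up to translation. -/
noncomputable def samCount (d k n : ℕ) : ℕ :=
  Nat.card (Quot fun A B : {M : Finset (Face d) // IsSAM d k n M} =>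
    TransEquiv A.val B.val)

/-- The number of closed `(d,k)`-self-avoiding manifolds of `k`-area `n`, up to
translation. -/
noncomputable def closedSamCount (d k n : ℕ) : ℕ :=
  Nat.card (Quot fun A B : {M : Finset (Face d) // IsClosedSAM d k n M} =>
    TransEquiv A.val B.val)

/-- The number of `(d,k)`-fixed polyominoids of `k`-area `n`, up to translation. -/
noncomputable def xdCount (d k n : ℕ) : ℕ :=
  Nat.card (Quot fun A B : {M : Finset (Face d) // IsXD d k n M} =>
    TransEquiv A.val B.val)

/-- Consistency of a set of faces with a partial exploration. -/
def ExplCons {d : ℕ} (k : ℕ) (A Q : Finset (Face d)) (m : ℕ) (M : Finset (Face d)) : Prop :=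
  A ⊆ M ∧ M.card = A.card + m ∧ (∀ f ∈ M, f.1.card = k) ∧ ConnectedFaces M ∧
    (∀ e : Face d, (M.filter fun f => e ∈ faceEdges f).card ≤ 2) ∧
    ∀ f ∈ A, ∀ e ∈ faceEdges f, e ∉ Q → ∀ g ∈ M, e ∈ faceEdges g → g ∈ A

/-- The faces around an edge. -/
def facesAt {d : ℕ} (e : Face d) : Finset (Face d) :=
  (e.1ᶜ).biUnion fun i =>
    {(insert i e.1, e.2), (insert i e.1, e.2 - Pi.single i 1)}

lemma mem_facesAt {d : ℕ} {e g : Face d} (h : e ∈ faceEdges g) : g ∈ facesAt e := by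
  obtain ⟨S, v⟩ := g
  simp only [faceEdges, Finset.mem_biUnion, Finset.mem_insert, Finset.mem_singleton] at h
  obtain ⟨i, hi, h | h⟩ := h
  · subst h
    simp only [facesAt, Finset.mem_biUnion, Finset.mem_insert, Finset.mem_singleton]
    exact ⟨i, by simp, Or.inl (by simp [Finset.insert_erase hi])⟩
  · subst h
    simp only [facesAt, Finset.mem_biUnion, Finset.mem_insert, Finset.mem_singleton]
    exact ⟨i, by simp, Or.inr (by simp [Finset.insert_erase hi])⟩

lemma card_facesAt {d : ℕ} (e : Face d) : (facesAt e).card ≤ (d - e.1.card) * 2 := by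
  unfold facesAt
  refine (Finset.card_biUnion_le_card_mul _ _ 2 (fun i _ => Finset.card_le_two)).trans ?_
  simp [Finset.card_compl]

lemma card_faceEdges {d : ℕ} (f : Face d) : (faceEdges f).card ≤ f.1.card * 2 := by
  unfold faceEdges
  exact Finset.card_biUnion_le_card_mul _ _ 2 (fun i _ => Finset.card_le_two)

lemma card_edge {d : ℕ} {e f : Face d} (h : e ∈ faceEdges f) : e.1.card + 1 = f.1.card := by
  simp only [faceEdges, Finset.mem_biUnion, Finset.mem_insert, Finset.mem_singleton] at h
  obtain ⟨i, hi, h | h⟩ := h <;> subst h <;> exact Finset.card_erase_add_one hi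

lemma explCons_closed {d k : ℕ} {A M : Finset (Face d)} {m : ℕ} (hA : A.Nonempty)
    (h : ExplCons k A ∅ m M) : M = A := by
  obtain ⟨h1, h2, h3, h4, h5, h6⟩ := h
  refine Finset.Subset.antisymm (fun g hg => ?_) h1
  obtain ⟨f, hf⟩ := hA
  have := h4 f (h1 hf) g hg
  clear hg
  induction this with
  | refl => exact hf
  | tail _ hbc ih =>
    obtain ⟨hb, hc, _, e, he1, he2⟩ := hbc
    exact h6 _ ih e he1 (by simp) _ hc he2

lemma explCons_zero {d k : ℕ} {A Q M : Finset (Face d)} 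
    (h : ExplCons k A Q 0 M) : M = A := 
  (Finset.eq_of_subset_of_card_le h.1 (by have := h.2.1; omega)).symm

lemma expl_count {d k : ℕ} (hk : 1 ≤ k) (N : ℕ) : ∀ (A Q : Finset (Face d)) (m : ℕ)
    (F : Finset (Finset (Face d))), A.Nonempty → (∀ f ∈ A, f.1.card = k) →
    (∀ e ∈ Q, ∃ f ∈ A, e ∈ faceEdges f) → Q.card + (2 * k - 1) * m ≤ N →
    (∀ M ∈ F, ExplCons k A Q m M) →
    F.card ≤ N.choose m * (2 * (d - k) + 1) ^ m := by
  induction N with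
  | zero =>
    intro A Q m F hA hAk hQ hN hF
    have hm : m = 0 := by
      rcases Nat.eq_zero_or_pos m with h | h
      · exact h
      · have : 0 < (2 * k - 1) * m := Nat.mul_pos (by omega) h
        omega
    subst hm
    simp only [Nat.choose_self, pow_zero, mul_one]
    refine Finset.card_le_one.2 fun a ha b hb => ?_
    rw [explCons_zero (hF a ha), explCons_zero (hF b hb)]
  | succ N ih =>
    intro A Q m F hA hAk hQ hN hF
    rcases m with _ | m
    · simp only [Nat.choose_zero_right, pow_zero, mul_one]
      refine Finset.card_le_one.2 fun a ha b hb => ?_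
      rw [explCons_zero (hF a ha), explCons_zero (hF b hb)]
    rcases Q.eq_empty_or_nonempty with rfl | ⟨e, he⟩
    · have : F = ∅ := by
        refine Finset.eq_empty_of_forall_notMem fun M hM => ?_
        have h1 := explCons_closed hA (hF M hM)
        have h2 := (hF M hM).2.1
        rw [h1] at h2
        omega
      simp [this]
    obtain ⟨f, hfA, hef⟩ := hQ e he
    have hsub : F ⊆ (F.filter fun M => ∀ g ∈ M, e ∈ faceEdges g → g ∈ A) ∪
        ((facesAt e).erase f).biUnion
          fun g => F.filter fun M => g ∈ M ∧ g ∉ A ∧ e ∈ faceEdges g := by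
      intro M hM
      by_cases h : ∀ g ∈ M, e ∈ faceEdges g → g ∈ A
      · exact Finset.mem_union_left _ (Finset.mem_filter.2 ⟨hM, h⟩)
      · push Not at h
        obtain ⟨g, hg, heg, hgA⟩ := h
        refine Finset.mem_union_right _ (Finset.mem_biUnion.2 ⟨g, ?_, ?_⟩)
        · refine Finset.mem_erase.2 ⟨?_, mem_facesAt heg⟩
          rintro rfl
          exact hgA hfA
        · exact Finset.mem_filter.2 ⟨hM, hg, hgA, heg⟩
    have hQc : (Q.erase e).card + 1 = Q.card := Finset.card_erase_add_one he
    have c1 : (F.filter fun M => ∀ g ∈ M, e ∈ faceEdges g → g ∈ A).card ≤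
        N.choose (m + 1) * (2 * (d - k) + 1) ^ (m + 1) := by
      refine ih A (Q.erase e) (m + 1) _ hA hAk
        (fun e' he' => hQ e' (Finset.mem_of_mem_erase he')) (by omega) ?_
      intro M hM
      obtain ⟨hM, hMe⟩ := Finset.mem_filter.1 hM
      obtain ⟨h1, h2, h3, h4, h5, h6⟩ := hF M hM
      refine ⟨h1, h2, h3, h4, h5, ?_⟩
      intro f' hf' e' he' hne g hg heg
      by_cases hee : e' = e
      · subst hee; exact hMe g hg heg
      · exact h6 f' hf' e' he' (fun h => hne (Finset.mem_erase.2 ⟨hee, h⟩)) g hg heg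
    have c2 : ∀ g ∈ (facesAt e).erase f,
        (F.filter fun M => g ∈ M ∧ g ∉ A ∧ e ∈ faceEdges g).card ≤
        N.choose m * (2 * (d - k) + 1) ^ m := by
      intro g hg
      have hgf : g ≠ f := (Finset.mem_erase.1 hg).1
      rcases (F.filter fun M => g ∈ M ∧ g ∉ A ∧ e ∈ faceEdges g).eq_empty_or_nonempty with
        h0 | ⟨M₀, hM₀⟩
      · simp [h0]
      obtain ⟨hM₀F, hgM₀, hgA, heg⟩ := Finset.mem_filter.1 hM₀
      have hgk : g.1.card = k := (hF M₀ hM₀F).2.2.1 g hgM₀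
      refine ih (insert g A) (Q.erase e ∪ (faceEdges g).erase e) m _ (by simp) ?_ ?_ ?_ ?_
      · intro f' hf'
        rcases Finset.mem_insert.1 hf' with rfl | h
        · exact hgk
        · exact hAk _ h
      · intro e' he'
        rcases Finset.mem_union.1 he' with h | h
        · obtain ⟨f', h1, h2⟩ := hQ e' (Finset.mem_of_mem_erase h)
          exact ⟨f', Finset.mem_insert_of_mem h1, h2⟩
        · exact ⟨g, Finset.mem_insert_self _ _, Finset.mem_of_mem_erase h⟩
      · have h1 := Finset.card_union_le (Q.erase e) ((faceEdges g).erase e)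
        have h2 : ((faceEdges g).erase e).card + 1 = (faceEdges g).card :=
          Finset.card_erase_add_one heg
        have h3 := card_faceEdges g
        rw [hgk] at h3
        rw [Nat.mul_succ] at hN
        omega
      · intro M hM
        obtain ⟨hM, hgM, -, -⟩ := Finset.mem_filter.1 hM
        obtain ⟨h1, h2, h3, h4, h5, h6⟩ := hF M hM
        refine ⟨Finset.insert_subset hgM h1, ?_, h3, h4, h5, ?_⟩
        · rw [Finset.card_insert_of_notMem hgA]; omega
        intro f' hf' e' he' hne g' hg' heg'
        by_cases hee : e' = e
        · subst hee
          by_contra hcon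
          have hcon' : g' ≠ g ∧ g' ∉ A := by simpa using hcon
          have h3c : ({f, g, g'} : Finset (Face d)).card = 3 := by
            rw [Finset.card_eq_three]
            refine ⟨f, g, g', hgf.symm, ?_, hcon'.1.symm, rfl⟩
            rintro rfl
            exact hcon'.2 hfA
          have h3s : ({f, g, g'} : Finset (Face d)) ⊆ M.filter fun f => e' ∈ faceEdges f := by
            intro x hx
            simp only [Finset.mem_insert, Finset.mem_singleton] at hx
            rcases hx with rfl | rfl | rfl
            · exact Finset.mem_filter.2 ⟨h1 hfA, hef⟩
            · exact Finset.mem_filter.2 ⟨hgM, heg⟩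
            · exact Finset.mem_filter.2 ⟨hg', heg'⟩
          have := Finset.card_le_card h3s
          have := h5 e'
          omega
        · have hn1 : e' ∉ Q := fun h =>
            hne (Finset.mem_union_left _ (Finset.mem_erase.2 ⟨hee, h⟩))
          have hn2 : e' ∉ faceEdges g := fun h =>
            hne (Finset.mem_union_right _ (Finset.mem_erase.2 ⟨hee, h⟩))
          rcases Finset.mem_insert.1 hf' with rfl | h
          · exact absurd he' hn2
          · exact Finset.mem_insert_of_mem (h6 f' h e' he' hn1 g' hg' heg')
    have c3 : ((facesAt e).erase f).card ≤ 2 * (d - k) + 1 := by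
      have h1 : ((facesAt e).erase f).card + 1 = (facesAt e).card :=
        Finset.card_erase_add_one (mem_facesAt hef)
      have h2 := card_facesAt e
      have h3 := card_edge hef
      rw [hAk f hfA] at h3
      have h4 : f.1.card ≤ d := by simpa using Finset.card_le_univ f.1
      rw [hAk f hfA] at h4
      omega
    calc F.card ≤ _ := Finset.card_le_card hsub
      _ ≤ _ := Finset.card_union_le _ _
      _ ≤ N.choose (m + 1) * (2 * (d - k) + 1) ^ (m + 1) +
          (2 * (d - k) + 1) * (N.choose m * (2 * (d - k) + 1) ^ m) :=
        add_le_add c1 ((Finset.card_biUnion_le_card_mul _ _ _ c2).trans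
          (Nat.mul_le_mul_right _ c3))
      _ = _ := by rw [Nat.choose_succ_succ]; ring

lemma translateFace_inj {d : ℕ} (t : Fin d → ℤ) : Function.Injective (translateFace t) := by
  rintro ⟨S, v⟩ ⟨S', v'⟩ h
  simpa [translateFace] using h

lemma translate_edge {d : ℕ} (t : Fin d → ℤ) {e f : Face d} (h : e ∈ faceEdges f) :
    translateFace t e ∈ faceEdges (translateFace t f) := by
  simp only [faceEdges, Finset.mem_biUnion, Finset.mem_insert, Finset.mem_singleton] at h ⊢
  obtain ⟨i, hi, h | h⟩ := h
  · exact ⟨i, hi, Or.inl (by rw [h]; rfl)⟩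
  · exact ⟨i, hi, Or.inr (by rw [h]; simp [translateFace, add_right_comm])⟩

lemma translate_neg {d : ℕ} (t : Fin d → ℤ) (f : Face d) :
    translateFace (-t) (translateFace t f) = f := by
  simp [translateFace]

lemma translate_SAM {d k n : ℕ} (t : Fin d → ℤ) {M : Finset (Face d)} (h : IsSAM d k n M) :
    IsSAM d k n (M.image (translateFace t)) := by
  obtain ⟨h1, h2, h3, h4⟩ := h
  refine ⟨?_, ?_, ?_, ?_⟩
  · rw [Finset.card_image_of_injective _ (translateFace_inj t), h1]
  · intro f hf
    obtain ⟨f, hfM, rfl⟩ := Finset.mem_image.1 hf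
    exact h2 f hfM
  · intro f hf g hg
    obtain ⟨f, hfM, rfl⟩ := Finset.mem_image.1 hf
    obtain ⟨g, hgM, rfl⟩ := Finset.mem_image.1 hg
    refine Relation.ReflTransGen.lift (translateFace t) ?_ _ _ (h3 f hfM g hgM)
    rintro a b ⟨ha, hb, hab, e, he1, he2⟩
    exact ⟨Finset.mem_image_of_mem _ ha, Finset.mem_image_of_mem _ hb,
      fun h => hab (translateFace_inj t h), _, translate_edge t he1, translate_edge t he2⟩
  · intro e
    refine le_trans ?_ (h4 (translateFace (-t) e))
    rw [← Finset.card_image_of_injective (M.filter _) (translateFace_inj t)]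
    refine Finset.card_le_card fun x hx => ?_
    obtain ⟨hx, hex⟩ := Finset.mem_filter.1 hx
    obtain ⟨f, hf, rfl⟩ := Finset.mem_image.1 hx
    refine Finset.mem_image_of_mem _ (Finset.mem_filter.2 ⟨hf, ?_⟩)
    simpa [translate_neg] using translate_edge (-t) hex

lemma samCount_nat {d k n : ℕ} (hk : 1 ≤ k) (hn : 1 ≤ n) :
    samCount d k n ≤ d.choose k *
      (((2 * k - 1) * n + 1).choose (n - 1) * (2 * (d - k) + 1) ^ (n - 1)) := by
  classical
  unfold samCount
  rcases finite_or_infinite (Quot fun A B : {M : Finset (Face d) // IsSAM d k n M} =>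
    TransEquiv A.val B.val) with hfin | hinf
  swap
  · rw [Nat.card_eq_zero_of_infinite]; exact Nat.zero_le _
  have hrep : ∀ q : (Quot fun A B : {M : Finset (Face d) // IsSAM d k n M} =>
      TransEquiv A.val B.val), ∃ M : {M : Finset (Face d) // IsSAM d k n M},
      Quot.mk _ M = q ∧ ∃ S, (S, (0 : Fin d → ℤ)) ∈ M.val := by
    intro q
    obtain ⟨⟨M, hM⟩, rfl⟩ := Quot.exists_rep q
    have hne : M.Nonempty := by
      rw [← Finset.card_pos, hM.1]; omega
    obtain ⟨⟨S, v⟩, hf⟩ := hne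
    refine ⟨⟨M.image (translateFace (-v)), translate_SAM _ hM⟩, ?_, S, ?_⟩
    · exact (Quot.sound ⟨-v, rfl⟩).symm
    · exact Finset.mem_image.2 ⟨(S, v), hf, by simp [translateFace]⟩
  choose r hr hS using hrep
  have := Fintype.ofFinite (Quot fun A B : {M : Finset (Face d) // IsSAM d k n M} =>
    TransEquiv A.val B.val)
  have hinj : Function.Injective fun q => (r q).val := by
    intro a b hab
    rw [← hr a, ← hr b, Subtype.ext hab]
  rw [Nat.card_eq_fintype_card, ← Finset.card_univ,
    ← Finset.card_image_of_injective _ hinj]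
  set F := Finset.univ.image fun q => (r q).val with hFdef
  have hFS : ∀ M ∈ F, IsSAM d k n M ∧ ∃ S, (S, (0 : Fin d → ℤ)) ∈ M := by
    intro M hM
    obtain ⟨q, -, rfl⟩ := Finset.mem_image.1 hM
    exact ⟨(r q).2, hS q⟩
  have hsub : F ⊆ (Finset.powersetCard k (Finset.univ : Finset (Fin d))).biUnion
      fun S => F.filter fun M => (S, (0 : Fin d → ℤ)) ∈ M := by
    intro M hM
    obtain ⟨h1, S, h2⟩ := hFS M hM
    exact Finset.mem_biUnion.2 ⟨S, Finset.mem_powersetCard.2 ⟨Finset.subset_univ _, h1.2.1 _ h2⟩,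
      Finset.mem_filter.2 ⟨hM, h2⟩⟩
  refine (Finset.card_le_card hsub).trans
    ((Finset.card_biUnion_le_card_mul _ _ _ ?_).trans
      (le_of_eq (by rw [Finset.card_powersetCard, Finset.card_univ, Fintype.card_fin])))
  intro S hSk
  have hSk := (Finset.mem_powersetCard.1 hSk).2
  refine expl_count hk _ {(S, 0)} (faceEdges (S, 0)) (n - 1) _ (by simp) ?_ ?_ ?_ ?_
  · intro f hf
    rw [Finset.mem_singleton.1 hf]; exact hSk
  · intro e he
    exact ⟨_, Finset.mem_singleton_self _, he⟩
  · have h := card_faceEdges ((S, 0) : Face d)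
    simp only [hSk] at h
    obtain ⟨n, rfl⟩ : ∃ j, n = j + 1 := ⟨n - 1, by omega⟩
    rw [Nat.mul_succ, Nat.add_sub_cancel]
    omega
  · intro M hM
    obtain ⟨hM, hSM⟩ := Finset.mem_filter.1 hM
    obtain ⟨h1, h2, h3, h4⟩ := (hFS M hM).1
    refine ⟨by simpa using hSM, ?_, h2, h3, h4, ?_⟩
    · rw [Finset.card_singleton]; omega
    · intro f hf e he hne
      rw [Finset.mem_singleton.1 hf] at he
      exact absurd he hne

lemma choose_bound (c n : ℕ) (hc : 2 ≤ c) (hn : 1 ≤ n) :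
    ((((c + 1) * n + 1).choose (n - 1) : ℕ) : ℝ) ≤
      (((c + 1 : ℕ) : ℝ) ^ (c + 1) / ((c : ℕ) : ℝ) ^ c) ^ n := by
  obtain ⟨m, rfl⟩ : ∃ j, n = j + 1 := ⟨n - 1, by omega⟩
  have hN : (c + 1) * (m + 1) + 1 = (c * (m + 1) + 2) + m := by ring
  rw [Nat.add_sub_cancel, hN]
  have hc' : (2 : ℝ) ≤ c := by exact_mod_cast hc
  -- binomial theorem: choose * c ^ (N - m) ≤ (c + 1) ^ N
  have h1 : (((c * (m + 1) + 2) + m).choose m) * c ^ (c * (m + 1) + 2) ≤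
      (c + 1) ^ ((c * (m + 1) + 2) + m) := by
    rw [add_comm c 1, add_pow]
    refine le_trans (le_of_eq ?_) (Finset.single_le_sum (f := fun j =>
      1 ^ j * c ^ ((c * (m + 1) + 2) + m - j) * (((c * (m + 1) + 2) + m).choose j))
      (fun _ _ => Nat.zero_le _) (Finset.mem_range.2 (show m < _ by omega)))
    simp [mul_comm]
  have h2 : ((((c * (m + 1) + 2) + m).choose m : ℕ) : ℝ) * (c : ℝ) ^ (c * (m + 1) + 2) ≤
      ((c : ℝ) + 1) ^ ((c * (m + 1) + 2) + m) := by exact_mod_cast h1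
  rw [div_pow, ← pow_mul, ← pow_mul, le_div_iff₀ (by positivity)]
  have hc2 : (0 : ℝ) < (c : ℝ) ^ 2 := by positivity
  refine le_of_mul_le_mul_right ?_ hc2
  calc _ = ((((c * (m + 1) + 2) + m).choose m : ℕ) : ℝ) * (c : ℝ) ^ (c * (m + 1) + 2) := by ring
    _ ≤ ((c : ℝ) + 1) ^ ((c * (m + 1) + 2) + m) := h2
    _ = ((c : ℝ) + 1) ^ ((c + 1) * (m + 1)) * (c + 1) := by
      rw [← pow_succ]; congr 1; ring
    _ ≤ ((c + 1 : ℕ) : ℝ) ^ ((c + 1) * (m + 1)) * (c : ℝ) ^ 2 := by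
      push_cast
      refine mul_le_mul_of_nonneg_left ?_ (by positivity)
      nlinarith

theorem samCount_upper_bound (d k : ℕ) (hk : 2 ≤ k) (hkd : k ≤ d) (n : ℕ) (hn : 1 ≤ n) :
    (samCount d k n : ℝ) ≤
      (d.choose k : ℝ) *
        (((2 * k - 1 : ℕ) : ℝ) ^ (2 * k - 1) / ((2 * k - 2 : ℕ) : ℝ) ^ (2 * k - 2)) ^ n *
        ((2 * (d - k) + 1 : ℕ) : ℝ) ^ (n - 1) := by
  have h1 := samCount_nat (d := d) (k := k) (n := n) (by omega) hn
  have h2 := choose_bound (2 * k - 2) n (by omega) hn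
  have hc : 2 * k - 2 + 1 = 2 * k - 1 := by omega
  rw [hc] at h2
  have h3 : (samCount d k n : ℝ) ≤ (d.choose k : ℝ) *
      ((((2 * k - 1) * n + 1).choose (n - 1) : ℕ) *
        ((2 * (d - k) + 1 : ℕ) : ℝ) ^ (n - 1)) := by exact_mod_cast h1
  refine h3.trans ?_
  rw [mul_assoc]
  gcongr
end

section
/- For all integers d, k with 1 ≤ k ≤ d and d ≥ 2, setting w = (2k−1)(2(d−k)+1), for all n ≥ 1 the number of (d,k)-fixed polyominoids of k-area n satisfies c^XD_{(d,k),n} ≤ C(d,k) · (w^w/(w−1)^{w−1})^{n−1}, where C(d,k) is the binomial coefficient d choose k. -/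
open Filter

noncomputable def xdDecode {N F : Type*} [DecidableEq F] {w : ℕ} (face : N → F) (child : N → Fin w → N) :
    List (Finset (Fin w)) → List N → Finset F → Finset F
  | [], _, V => V
  | _ :: _, [], V => V
  | c :: cs, x :: P, V =>
      xdDecode face child cs (P ++ c.toList.map (child x))
        (V ∪ c.image (fun j => face (child x j)))

open Classical in
theorem xdDecode_exists {N F : Type*} [DecidableEq F] {w : ℕ} (face : N → F) (child : N → Fin w → N)
    (adj : F → F → Prop) (cov : N → Set F) (good : N → Prop) (M : Finset F)
    (H : ∀ x, good x → ∀ h ∈ M, adj (face x) h → h ∉ cov x →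
      ∃ j, good (child x j) ∧ face (child x j) = h ∧
        ∀ y ∈ M, y ∈ cov (child x j) → y = face x ∨ adj (face x) y)
    (hconn : ∀ V ⊆ M, V.Nonempty → (∀ a ∈ V, ∀ y ∈ M, adj a y → y ∈ V) → V = M) :
    ∀ (m : ℕ) (P : List N) (V : Finset F), V ⊆ M → V.Nonempty →
      (∀ x ∈ P, good x ∧ face x ∈ V ∧ ∀ y ∈ M, y ∈ cov x → y ∈ V) →
      (∀ a ∈ V, (∃ x ∈ P, face x = a) ∨ ∀ y ∈ M, adj a y → y ∈ V) →
      P.length + (M \ V).card = m + 1 →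
      ∃ cs : List (Finset (Fin w)), cs.length = m ∧
        (cs.map Finset.card).sum = (M \ V).card ∧ xdDecode face child cs P V = M := by
  intro m
  induction m with
  | zero =>
    intro P V hVM hV hP hC hm
    have hPne : P ≠ [] := by
      rintro rfl
      have : V = M := hconn V hVM hV (fun a ha => (hC a ha).resolve_left (by simp))
      subst this
      simp at hm
    have h1 : 0 < P.length := List.length_pos_iff.mpr hPne
    have h0 : (M \ V).card = 0 := by omega
    refine ⟨[], rfl, by simp [h0], ?_⟩
    simp only [xdDecode]
    exact Finset.Subset.antisymm hVM (Finset.sdiff_eq_empty_iff_subset.mp (Finset.card_eq_zero.mp h0))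
  | succ m ih =>
    intro P V hVM hV hP hC hm
    cases P with
    | nil =>
      have : V = M := hconn V hVM hV (fun a ha => (hC a ha).resolve_left (by simp))
      subst this
      simp at hm
    | cons x P =>
      obtain ⟨hgx, hxV, hcx⟩ := hP x (by simp)
      set new := (M \ V).filter (fun h => adj (face x) h) with hnew
      have hnewM : ∀ h ∈ new, h ∈ M ∧ h ∉ V ∧ adj (face x) h := by
        intro h hh
        simp only [hnew, Finset.mem_filter, Finset.mem_sdiff] at hh
        exact ⟨hh.1.1, hh.1.2, hh.2⟩
      have hex2 : ∀ h : new, ∃ i, good (child x i) ∧ face (child x i) = h.1 ∧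
        ∀ y ∈ M, y ∈ cov (child x i) → y = face x ∨ adj (face x) y := by
        intro h
        obtain ⟨a, b, c⟩ := hnewM h.1 h.2
        exact H x hgx h a c (fun hc => b (hcx h a hc))
      choose j hj1 hj2 hj3 using hex2
      have hjinj : Function.Injective j := by
        intro a b hab
        apply Subtype.ext
        rw [← hj2 a, ← hj2 b, hab]
      set c : Finset (Fin w) := Finset.univ.image j with hc
      have hccard : c.card = new.card := by
        rw [hc, Finset.card_image_of_injective _ hjinj]; simp
      have hcim : c.image (fun i => face (child x i)) = new := by
        ext h
        simp only [hc, Finset.mem_image, Finset.mem_univ, true_and]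
        constructor
        · rintro ⟨i, ⟨a, rfl⟩, rfl⟩
          rw [hj2]; exact a.2
        · intro hh
          exact ⟨j ⟨h, hh⟩, ⟨_, rfl⟩, hj2 _⟩
      have hsd : (M \ (V ∪ new)).card + new.card = (M \ V).card := by
        have hs : new ⊆ M \ V := Finset.filter_subset _ _
        rw [← Finset.card_sdiff_add_card_eq_card hs]
        congr 2
        ext y
        simp only [Finset.mem_union, Finset.mem_sdiff]
        tauto
      have hcs := ih (P ++ c.toList.map (child x)) (V ∪ new) ?_ ?_ ?_ ?_ ?_
      · obtain ⟨cs, h1, h2, h3⟩ := hcs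
        refine ⟨c :: cs, by simp [h1], ?_, ?_⟩
        · simp only [List.map_cons, List.sum_cons, h2, hccard]
          omega
        · simp only [xdDecode]
          convert h3 using 3
          
      · intro h hh
        rcases Finset.mem_union.mp hh with hh | hh
        · exact hVM hh
        · exact (hnewM h hh).1
      · exact hV.mono Finset.subset_union_left
      · intro z hz
        rw [List.mem_append] at hz
        rcases hz with hz | hz
        · obtain ⟨a, b, c'⟩ := hP z (by simp [hz])
          exact ⟨a, Finset.mem_union_left _ b, fun y hy hyc => Finset.mem_union_left _ (c' y hy hyc)⟩
        · simp only [hc, List.mem_map, Finset.mem_toList, Finset.mem_image, Finset.mem_univ, true_and] at hz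
          obtain ⟨i, ⟨a, rfl⟩, rfl⟩ := hz
          refine ⟨hj1 a, ?_, ?_⟩
          · rw [hj2]; exact Finset.mem_union_right _ a.2
          · intro y hy hyc
            rcases hj3 a y hy hyc with rfl | hadj
            · exact Finset.mem_union_left _ hxV
            · by_cases hyV : y ∈ V
              · exact Finset.mem_union_left _ hyV
              · apply Finset.mem_union_right
                simp [hnew, hy, hyV, hadj]
      · intro a ha
        rcases Finset.mem_union.mp ha with ha | ha
        · rcases hC a ha with ⟨z, hz, rfl⟩ | hcl
          · rcases List.mem_cons.mp hz with rfl | hz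
            · right
              intro y hy hadj
              by_cases hyV : y ∈ V
              · exact Finset.mem_union_left _ hyV
              · apply Finset.mem_union_right
                simp [hnew, hy, hyV, hadj]
            · exact Or.inl ⟨z, by simp [hz], rfl⟩
          · exact Or.inr fun y hy hadj => Finset.mem_union_left _ (hcl y hy hadj)
        · left
          refine ⟨child x (j ⟨a, ha⟩), ?_, hj2 _⟩
          rw [List.mem_append]
          right
          simp only [List.mem_map, Finset.mem_toList]
          exact ⟨_, by simp [hc], rfl⟩
      · simp only [List.length_append, List.length_map, Finset.length_toList, hccard]
        simp only [List.length_cons] at hm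
        omega

def xdCofaces {d : ℕ} (e : Face d) : Finset (Face d) :=
  (e.1ᶜ).biUnion fun j =>
    {(insert j e.1, e.2), (insert j e.1, e.2 - Pi.single j 1)}

theorem mem_xdCofaces {d : ℕ} {e h : Face d} (he : e ∈ faceEdges h) : h ∈ xdCofaces e := by
  obtain ⟨T, u⟩ := h
  simp only [faceEdges, Finset.mem_biUnion, Finset.mem_insert, Finset.mem_singleton] at he
  obtain ⟨i, hi, rfl | rfl⟩ := he
  · simp only [xdCofaces, Finset.mem_biUnion, Finset.mem_insert, Finset.mem_singleton]
    exact ⟨i, by simp, Or.inl (by simp [Finset.insert_erase hi])⟩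
  · simp only [xdCofaces, Finset.mem_biUnion, Finset.mem_insert, Finset.mem_singleton]
    exact ⟨i, by simp, Or.inr (by simp [Finset.insert_erase hi])⟩

theorem card_of_mem_faceEdges {d : ℕ} {e h : Face d} (he : e ∈ faceEdges h) :
    e.1.card + 1 = h.1.card := by
  simp only [faceEdges, Finset.mem_biUnion, Finset.mem_insert, Finset.mem_singleton] at he
  obtain ⟨i, hi, rfl | rfl⟩ := he <;> exact Finset.card_erase_add_one hi

theorem card_faceEdges_le {d : ℕ} (h : Face d) : (faceEdges h).card ≤ 2 * h.1.card := by
  unfold faceEdges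
  rw [mul_comm]
  exact Finset.card_biUnion_le_card_mul _ _ _ (fun i _ => Finset.card_le_two)

theorem card_xdCofaces_le {d : ℕ} (e : Face d) : (xdCofaces e).card ≤ 2 * (d - e.1.card) := by
  unfold xdCofaces
  rw [mul_comm]
  refine (Finset.card_biUnion_le_card_mul _ _ 2 (fun i _ => Finset.card_le_two)).trans ?_
  rw [Finset.card_compl]; simp

/-- neighbours through a set of edges -/
def xdNbr {d : ℕ} (g : Face d) (E : Finset (Face d)) : Finset (Face d) :=
  E.biUnion fun e => (xdCofaces e).erase g

theorem card_xdNbr_le {d k : ℕ} (g : Face d) (hg : g.1.card = k) (hkd : k ≤ d)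
    (E : Finset (Face d)) (hE : E ⊆ faceEdges g) :
    (xdNbr g E).card ≤ E.card * (2 * (d - k) + 1) := by
  refine Finset.card_biUnion_le_card_mul _ _ _ ?_
  intro e he
  have h1 := card_of_mem_faceEdges (hE he)
  have h2 := card_xdCofaces_le e
  rw [Finset.card_erase_of_mem (mem_xdCofaces (hE he))]
  omega

def xdKey {d : ℕ} (f : Face d) : Lex (Fin d → ℤ) :=
  toLex (fun i => 2 * f.2 i + if i ∈ f.1 then 1 else 0)

theorem xdKey_inj {d : ℕ} : Function.Injective (xdKey (d := d)) := by
  rintro ⟨S, v⟩ ⟨T, u⟩ h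
  have h' : ∀ i, 2 * v i + (if i ∈ S then (1:ℤ) else 0) = 2 * u i + if i ∈ T then 1 else 0 :=
    fun i => congrFun (toLex.injective h) i
  have h1 : S = T := by
    ext i
    have := h' i
    split_ifs at this <;> first | omega | tauto
  subst h1
  congr 1
  funext i
  have := h' i
  omega

/-- antipode about the centre of g -/
def xdAnti {d : ℕ} (g h : Face d) : Face d :=
  (h.1, fun i => 2 * g.2 i + (if i ∈ g.1 then 1 else 0) - (if i ∈ h.1 then 1 else 0) - h.2 i)

theorem xdKey_anti {d : ℕ} (g h : Face d) : xdKey (xdAnti g h) = xdKey g + xdKey g - xdKey h := by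
  apply ofLex.injective
  funext i
  simp only [xdKey, xdAnti, ofLex_toLex, ofLex_add, ofLex_sub, Pi.add_apply, Pi.sub_apply]
  by_cases h1 : i ∈ g.1 <;> by_cases h2 : i ∈ h.1 <;> simp only [h1, h2, if_true, if_false] <;> ring

theorem xdAnti_invol {d : ℕ} (g h : Face d) : xdAnti g (xdAnti g h) = h := by
  apply xdKey_inj
  simp [xdKey_anti]

theorem xdAnti_edge {d : ℕ} (g h e : Face d) (he : e ∈ faceEdges h) :
    xdAnti g e ∈ faceEdges (xdAnti g h) := by
  simp only [faceEdges, Finset.mem_biUnion, Finset.mem_insert, Finset.mem_singleton] at he ⊢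
  obtain ⟨i, hi, rfl | rfl⟩ := he
  · refine ⟨i, hi, Or.inr ?_⟩
    simp only [xdAnti, Prod.mk.injEq, true_and]
    funext j
    by_cases hj : j = i
    · subst hj; simp [hi]; ring
    · simp [hj]
  · refine ⟨i, hi, Or.inl ?_⟩
    simp only [xdAnti, Prod.mk.injEq, true_and]
    funext j
    by_cases hj : j = i
    · subst hj; simp [hi]; ring
    · simp [hj]

theorem xdAnti_self {d : ℕ} (g : Face d) : xdAnti g g = g := by
  apply xdKey_inj
  simp [xdKey_anti]

theorem xdAnti_adj {d : ℕ} (g h : Face d) (hh : FaceAdj g h) : FaceAdj g (xdAnti g h) := by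
  obtain ⟨hne, e, he, he'⟩ := hh
  refine ⟨fun h' => hne ?_, xdAnti g e, ?_, xdAnti_edge g h e he'⟩
  · rw [← xdAnti_invol g h, ← h', xdAnti_self]
  · have := xdAnti_edge g g e he
    rwa [xdAnti_self] at this

theorem mem_xdNbr {d : ℕ} {g h : Face d} (E : Finset (Face d)) (hne : g ≠ h) (e : Face d)
    (he : e ∈ E) (he' : e ∈ faceEdges h) : h ∈ xdNbr g E :=
  Finset.mem_biUnion.mpr ⟨e, he, Finset.mem_erase.mpr ⟨hne.symm, mem_xdCofaces he'⟩⟩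

def XdSlots {d : ℕ} (w : ℕ) (g : Face d) (C : Set (Face d)) : Prop :=
  ∃ f : Fin w → Face d, ∀ h, FaceAdj g h → h ∉ C → ∃ j, f j = h

theorem xdSlots_of_card {d w : ℕ} (g : Face d) (C : Set (Face d)) (s : Finset (Face d))
    (hs : s.card ≤ w) (h : ∀ h, FaceAdj g h → h ∉ C → h ∈ s) : XdSlots w g C := by
  refine ⟨fun j => (s.toList).getD j g, fun y hy hyC => ?_⟩
  have hm := h y hy hyC
  rw [← Finset.mem_toList] at hm
  obtain ⟨i, hi, hiy⟩ := List.mem_iff_getElem.mp hm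
  have : i < s.card := by simpa using hi
  refine ⟨⟨i, by omega⟩, ?_⟩
  simp [List.getD_eq_getElem?_getD, List.getElem?_eq_getElem hi, hiy]

theorem xdSlots_edge {d k : ℕ} (hkd : k ≤ d) (g e : Face d) (hg : g.1.card = k)
    (he : e ∈ faceEdges g) :
    XdSlots ((2 * k - 1) * (2 * (d - k) + 1)) g {y | e ∈ faceEdges y} := by
  refine xdSlots_of_card g _ (xdNbr g ((faceEdges g).erase e)) ?_ ?_
  · refine (card_xdNbr_le g hg hkd _ (Finset.erase_subset _ _)).trans ?_
    apply Nat.mul_le_mul_right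
    rw [Finset.card_erase_of_mem he]
    have := card_faceEdges_le g
    omega
  · rintro h ⟨hne, e', h1, h2⟩ hC
    refine mem_xdNbr _ hne e' (Finset.mem_erase.mpr ⟨?_, h1⟩) h2
    rintro rfl
    exact hC h2

open Classical in
theorem xdSlots_root {d k : ℕ} (hk : 1 ≤ k) (hkd : k ≤ d) (g : Face d) (hg : g.1.card = k) :
    XdSlots ((2 * k - 1) * (2 * (d - k) + 1)) g {y | xdKey y < xdKey g} := by
  set U := (xdNbr g (faceEdges g)).filter (fun h => FaceAdj g h) with hU
  have hUm : ∀ h, FaceAdj g h → h ∈ U := by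
    rintro h hh
    obtain ⟨e, he, he'⟩ := hh.2
    exact Finset.mem_filter.mpr ⟨mem_xdNbr _ hh.1 e he he', hh⟩
  have hUa : ∀ h ∈ U, FaceAdj g h := fun h hh => (Finset.mem_filter.mp hh).2
  have hUc : U.card ≤ 2 * k * (2 * (d - k) + 1) := by
    refine (Finset.card_filter_le _ _).trans
      ((card_xdNbr_le g hg hkd _ subset_rfl).trans (Nat.mul_le_mul_right _ ?_))
    have := card_faceEdges_le g
    rwa [hg] at this
  have hle : (U.filter (fun h => ¬ xdKey h < xdKey g)).card ≤
      (U.filter (fun h => xdKey h < xdKey g)).card := by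
    apply Finset.card_le_card_of_injOn (xdAnti g)
    · intro h hh
      have hh' := Finset.mem_filter.mp hh
      have hadj := hUa h hh'.1
      refine Finset.mem_filter.mpr ⟨hUm _ (xdAnti_adj g h hadj), ?_⟩
      have hlt : xdKey g < xdKey h :=
        lt_of_le_of_ne (not_lt.mp hh'.2) (fun h' => hadj.1 (xdKey_inj h'))
      rw [xdKey_anti, sub_lt_iff_lt_add]
      exact add_lt_add_right hlt _
    · intro a _ b _ hab
      rw [← xdAnti_invol g a, ← xdAnti_invol g b]
      exact congrArg _ hab
  have hsum := Finset.card_filter_add_card_filter_not (s := U) (fun h => xdKey h < xdKey g)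
  refine xdSlots_of_card g _ (U.filter (fun h => ¬ xdKey h < xdKey g)) ?_ ?_
  · have h3 : (U.filter (fun h => ¬ xdKey h < xdKey g)).card ≤ k * (2 * (d - k) + 1) := by
      rw [mul_assoc] at hUc
      omega
    exact h3.trans (Nat.mul_le_mul_right _ (by omega))
  · intro h hh hC
    exact Finset.mem_filter.mpr ⟨hUm h hh, hC⟩

open Classical in
noncomputable def xdShared {d : ℕ} (g h : Face d) : Face d :=
  if hh : FaceAdj g h then hh.2.choose else g

theorem xdShared_spec {d : ℕ} {g h : Face d} (hh : FaceAdj g h) :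
    xdShared g h ∈ faceEdges g ∧ xdShared g h ∈ faceEdges h := by
  unfold xdShared
  rw [dif_pos hh]
  exact hh.2.choose_spec

open Classical in
noncomputable def xdChild {d : ℕ} (w : ℕ) (x : Face d × Set (Face d)) (j : Fin w) :
    Face d × Set (Face d) :=
  if hx : XdSlots w x.1 x.2 then
    (hx.choose j, {y | xdShared x.1 (hx.choose j) ∈ faceEdges y})
  else x

noncomputable def xdList {m w : ℕ} (c : Finset (Fin m × Fin w)) : List (Finset (Fin w)) :=
  List.ofFn fun i => Finset.univ.filter fun j => (i, j) ∈ c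

theorem xdList_exists {m w : ℕ} (cs : List (Finset (Fin w))) (h : cs.length = m) :
    ∃ c : Finset (Fin m × Fin w), xdList c = cs ∧ c.card = (cs.map Finset.card).sum := by
  subst h
  refine ⟨Finset.univ.filter fun p => p.2 ∈ cs.get p.1, ?_, ?_⟩
  · apply List.ext_getElem
    · simp [xdList]
    · intro i h1 h2
      ext x
      simp [xdList]
  · rw [Finset.card_filter, Fintype.sum_prod_type]
    have : (cs.map Finset.card).sum = ∑ i : Fin cs.length, (cs.get i).card := by
      conv_lhs => rw [← List.ofFn_get cs, List.map_ofFn, List.sum_ofFn]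
      rfl
    rw [this]
    refine Finset.sum_congr rfl fun i _ => ?_
    rw [← Finset.card_filter]
    simp

noncomputable def xdBuild (d w m : ℕ) (S : Finset (Fin d)) (c : Finset (Fin m × Fin w)) :
    Finset (Face d) :=
  xdDecode Prod.fst (xdChild w) (xdList c)
    [((S, 0), {y | xdKey y < xdKey ((S, 0) : Face d)})] {((S, 0) : Face d)}

theorem xdBuild_exists {d k m : ℕ} (hk : 1 ≤ k) (hkd : k ≤ d) (M : Finset (Face d))
    (hM : IsXD d k (m + 1) M) (S : Finset (Fin d)) (hS : ((S, 0) : Face d) ∈ M)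
    (hmin : ∀ y ∈ M, xdKey ((S, 0) : Face d) ≤ xdKey y) :
    ∃ c : Finset (Fin m × Fin ((2 * k - 1) * (2 * (d - k) + 1))), c.card = m ∧
      xdBuild d ((2 * k - 1) * (2 * (d - k) + 1)) m S c = M := by
  obtain ⟨hcard, hkf, hconn⟩ := hM
  set w := (2 * k - 1) * (2 * (d - k) + 1) with hw
  have key := xdDecode_exists (w := w) (Prod.fst : Face d × Set (Face d) → Face d) (xdChild w)
    FaceAdj Prod.snd (fun x => XdSlots w x.1 x.2) M ?_ ?_ m
    [((S, 0), {y | xdKey y < xdKey ((S, 0) : Face d)})] {((S, 0) : Face d)}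
    (by simpa using hS) (by simp) ?_ (by simp) ?_
  · obtain ⟨cs, h1, h2, h3⟩ := key
    obtain ⟨c, rfl, hc⟩ := xdList_exists cs h1
    refine ⟨c, ?_, h3⟩
    rw [hc, h2, Finset.card_sdiff_of_subset (by simpa using hS), hcard]
    simp
  · intro x hx h hhM hadj hcov
    obtain ⟨j, hj⟩ := hx.choose_spec h hadj hcov
    have hch : xdChild w x j = (h, {y | xdShared x.1 h ∈ faceEdges y}) := by
      unfold xdChild
      rw [dif_pos hx, hj]
    have hsp := xdShared_spec hadj
    refine ⟨j, ?_, by rw [hch], ?_⟩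
    · rw [hch]
      exact xdSlots_edge hkd h _ (hkf h hhM) hsp.2
    · rw [hch]
      intro y _ hyc
      by_cases hy : y = x.1
      · exact Or.inl hy
      · exact Or.inr ⟨fun h => hy h.symm, _, hsp.1, hyc⟩
  · intro V hVM hV hcl
    refine Finset.Subset.antisymm hVM ?_
    obtain ⟨a, ha⟩ := hV
    intro b hb
    have := hconn a (hVM ha) b hb
    induction this with
    | refl => exact ha
    | tail _ h ih => exact hcl _ (ih h.1) _ h.2.1 h.2.2
  · intro x hx
    rw [List.mem_singleton] at hx
    subst hx
    refine ⟨xdSlots_root hk hkd _ (hkf _ hS), by simp, ?_⟩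
    intro y hy hlt
    exact absurd hlt (not_lt.mpr (hmin y hy))
  · rw [Finset.card_sdiff_of_subset (by simpa using hS), hcard]
    simp
    omega

theorem translate_edges {d : ℕ} (t : Fin d → ℤ) (f e : Face d) (he : e ∈ faceEdges f) :
    translateFace t e ∈ faceEdges (translateFace t f) := by
  simp only [faceEdges, Finset.mem_biUnion, Finset.mem_insert, Finset.mem_singleton] at he ⊢
  obtain ⟨i, hi, rfl | rfl⟩ := he
  · exact ⟨i, hi, Or.inl rfl⟩
  · refine ⟨i, hi, Or.inr ?_⟩
    simp only [translateFace, Prod.mk.injEq, true_and]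
    abel

theorem translate_inj {d : ℕ} (t : Fin d → ℤ) : Function.Injective (translateFace (d := d) t) := by
  rintro ⟨S, v⟩ ⟨T, u⟩ h
  simpa [translateFace] using h

theorem translate_XD {d k n : ℕ} (t : Fin d → ℤ) (M : Finset (Face d)) (hM : IsXD d k n M) :
    IsXD d k n (M.image (translateFace t)) := by
  obtain ⟨hcard, hkf, hconn⟩ := hM
  refine ⟨by rw [Finset.card_image_of_injective _ (translate_inj t), hcard], ?_, ?_⟩
  · intro f hf
    obtain ⟨g, hg, rfl⟩ := Finset.mem_image.mp hf
    exact hkf g hg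
  · intro f hf g hg
    obtain ⟨f, hf', rfl⟩ := Finset.mem_image.mp hf
    obtain ⟨g, hg', rfl⟩ := Finset.mem_image.mp hg
    refine Relation.ReflTransGen.lift (translateFace t) ?_ _ _ (hconn f hf' g hg')
    rintro a b ⟨ha, hb, hne, e, h1, h2⟩
    exact ⟨Finset.mem_image_of_mem _ ha, Finset.mem_image_of_mem _ hb,
      fun h => hne (translate_inj t h), _, translate_edges t _ _ h1, translate_edges t _ _ h2⟩

theorem xdKey_translate {d : ℕ} (t : Fin d → ℤ) (f : Face d) :
    xdKey (translateFace t f) = xdKey f + toLex (fun i => 2 * t i) := by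
  apply ofLex.injective
  funext i
  simp only [xdKey, translateFace, ofLex_toLex, ofLex_add, Pi.add_apply]
  by_cases h1 : i ∈ f.1 <;> simp only [h1, if_true, if_false] <;> ring

theorem xdCount_le {d k m : ℕ} (hk : 1 ≤ k) (hkd : k ≤ d) :
    xdCount d k (m + 1) ≤
      d.choose k * (m * ((2 * k - 1) * (2 * (d - k) + 1))).choose m := by
  set w := (2 * k - 1) * (2 * (d - k) + 1) with hw
  let X := (Finset.powersetCard k (Finset.univ : Finset (Fin d))) ×ˢ
    (Finset.powersetCard m (Finset.univ : Finset (Fin m × Fin w)))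
  have hX : X.card = d.choose k * (m * w).choose m := by
    simp [X, Finset.card_product, Finset.card_powersetCard]
  have hex : ∀ q : Quot (fun A B : {M : Finset (Face d) // IsXD d k (m + 1) M} =>
      TransEquiv A.val B.val), ∃ x : X, ∃ A : {M : Finset (Face d) // IsXD d k (m + 1) M},
        Quot.mk _ A = q ∧ A.val = xdBuild d w m x.1.1 x.1.2 := by
    intro q
    obtain ⟨⟨M, hM⟩, rfl⟩ := Quot.exists_rep q
    have hne : M.Nonempty := by
      rw [← Finset.card_pos, hM.1]; omega
    obtain ⟨g, hg, hmin⟩ := Finset.exists_min_image M xdKey hne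
    have hM' := translate_XD (-g.2) M hM
    have hg' : translateFace (-g.2) g = (g.1, 0) := by simp [translateFace]
    obtain ⟨c, hc, hb⟩ := xdBuild_exists hk hkd _ hM' g.1
      (by rw [← hg']; exact Finset.mem_image_of_mem _ hg) (by
        intro y hy
        obtain ⟨z, hz, rfl⟩ := Finset.mem_image.mp hy
        rw [← hg', xdKey_translate, xdKey_translate]
        have := hmin z hz
        gcongr)
    refine ⟨⟨(g.1, c), ?_⟩, ⟨_, hM'⟩, ?_, hb.symm⟩
    · simp [X, hM.2.1 g hg, hc]
    · exact (Quot.sound ⟨-g.2, rfl⟩).symm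
  choose f A hA1 hA2 using hex
  have hinj : Function.Injective f := by
    intro a b hab
    rw [← hA1 a, ← hA1 b]
    congr 1
    apply Subtype.ext
    rw [hA2, hA2, hab]
  have := Nat.card_le_card_of_injective f hinj
  rw [← hX]
  simpa [xdCount] using this

theorem choose_mul_bound (w m : ℕ) (hw : 1 ≤ w) :
    (m * w).choose m * ((w - 1) ^ (w - 1)) ^ m ≤ (w ^ w) ^ m := by
  have h := add_pow (1 : ℕ) (w - 1) (m * w)
  have h1 : 1 + (w - 1) = w := by omega
  rw [h1] at h
  simp only [Nat.cast_id] at h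
  have hmw : m ≤ m * w := Nat.le_mul_of_pos_right _ hw
  have h2 := Finset.single_le_sum (f := fun i => 1 ^ i * (w - 1) ^ (m * w - i) * (m * w).choose i)
    (s := Finset.range (m * w + 1)) (fun i _ => Nat.zero_le _)
    (Finset.mem_range.mpr (show m < m * w + 1 by omega))
  rw [← h] at h2
  have h3 : m * w - m = (w - 1) * m := by
    rw [Nat.sub_mul, mul_comm w m, one_mul]
  simp only [one_pow, one_mul, h3] at h2
  rw [← pow_mul, ← pow_mul, mul_comm w m, mul_comm]
  exact h2

theorem xdCount_upper_bound (d k : ℕ) (hk : 1 ≤ k) (hkd : k ≤ d) (hd : 2 ≤ d)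
    (n : ℕ) (hn : 1 ≤ n) :
    (xdCount d k n : ℝ) ≤
      (d.choose k : ℝ) *
        ((((2 * k - 1) * (2 * (d - k) + 1) : ℕ) : ℝ) ^ ((2 * k - 1) * (2 * (d - k) + 1)) /
            (((2 * k - 1) * (2 * (d - k) + 1) - 1 : ℕ) : ℝ) ^
              ((2 * k - 1) * (2 * (d - k) + 1) - 1)) ^ (n - 1) := by
  obtain ⟨m, rfl⟩ : ∃ m, n = m + 1 := ⟨n - 1, by omega⟩
  have h1 := xdCount_le (m := m) hk hkd
  have hw : 2 ≤ (2 * k - 1) * (2 * (d - k) + 1) := by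
    rcases Nat.lt_or_ge k 2 with h | h
    · have : k = 1 := by omega
      subst this
      omega
    · calc 2 ≤ (2 * k - 1) * 1 := by omega
        _ ≤ _ := Nat.mul_le_mul_left _ (by omega)
  generalize (2 * k - 1) * (2 * (d - k) + 1) = w at *
  have h2 := choose_mul_bound w m (by omega)
  have h1' : (xdCount d k (m + 1) : ℝ) ≤ (d.choose k : ℝ) * ((m * w).choose m : ℝ) := by
    exact_mod_cast h1
  refine h1'.trans (mul_le_mul_of_nonneg_left ?_ (by positivity))
  have hpos : (0 : ℝ) < ((w - 1 : ℕ) : ℝ) := by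
    have : 0 < w - 1 := by omega
    exact_mod_cast this
  rw [Nat.add_sub_cancel, div_pow, le_div_iff₀ (by positivity)]
  exact_mod_cast h2
end

section
/- Let 1 ≤ k ≤ d and let Σ be a finite nonempty set of k-faces of ℤ^d. Let f be the element of Σ whose center coordinates are lexicographically smallest (respectively, largest) among all elements of Σ. If every (k−1)-edge of f is also a (k−1)-edge of some other k-face of Σ (i.e. f is not part of a boundary), then 1 ∉ S(f), i.e. the first coordinate direction is not one of the orientations of f. -/
open Filter

/-- The center coordinates of a face `(S, v)`: `v + (1/2) ∑_{i ∈ S} e_i`,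
viewed in `ℚ^d`. -/
def faceCenter {d : ℕ} (f : Face d) : Fin d → ℚ :=
  fun i => (f.2 i : ℚ) + (if i ∈ f.1 then 1 / 2 else 0)

/-- Strict lexicographic order on coordinate vectors. -/
def LexLt {d : ℕ} (a b : Fin d → ℚ) : Prop :=
  ∃ i : Fin d, (∀ j : Fin d, j < i → a j = b j) ∧ a i < b i

theorem LexLt.zero_le {d : ℕ} {a b : Fin d → ℚ} (h : LexLt a b) (z : Fin d)
    (hz : ∀ j, z ≤ j) : a z ≤ b z := by
  obtain ⟨i, h1, h2⟩ := h
  rcases (hz i).lt_or_eq with h | h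
  · exact (h1 z h).le
  · subst h; exact h2.le

theorem edge_cases {d : ℕ} (S : Finset (Fin d)) (u : Fin d → ℤ) (z : Fin d) (hz : z ∈ S)
    (g : Face d) (h : (S.erase z, u) ∈ faceEdges g) :
    (g.1 = S ∧ (g.2 = u ∨ g.2 + Pi.single z 1 = u)) ∨ (z ∉ g.1 ∧ g.2 z = u z) := by
  simp only [faceEdges, Finset.mem_biUnion, Finset.mem_insert, Finset.mem_singleton,
    Prod.mk.injEq] at h
  obtain ⟨i, hi, h⟩ := h
  have he : S.erase z = g.1.erase i := by rcases h with h | h <;> exact h.1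
  have hu : u = g.2 ∨ u = g.2 + Pi.single i 1 := by
    rcases h with h | h
    · exact Or.inl h.2
    · exact Or.inr h.2
  by_cases hiz : i = z
  · subst hiz
    left
    refine ⟨?_, ?_⟩
    · rw [← Finset.insert_erase hi, ← he, Finset.insert_erase hz]
    · rcases hu with h | h
      · exact Or.inl h.symm
      · exact Or.inr h.symm
  · right
    refine ⟨fun hg => ?_, ?_⟩
    · have : z ∈ g.1.erase i := Finset.mem_erase.2 ⟨fun h => hiz h.symm, hg⟩
      rw [← he] at this
      simp at this
    · rcases hu with h | h
      · rw [h]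
      · rw [h, Pi.add_apply, Pi.single_eq_of_ne (fun h => hiz h.symm), add_zero]

theorem lex_extreme_face_not_boundary_first_orientation
    (d k : ℕ) (hk : 1 ≤ k) (hkd : k ≤ d)
    (M : Finset (Face d)) (hM : M.Nonempty) (hfaces : ∀ f ∈ M, f.1.card = k)
    (f : Face d) (hf : f ∈ M)
    (hext : (∀ g ∈ M, g ≠ f → LexLt (faceCenter f) (faceCenter g)) ∨
      (∀ g ∈ M, g ≠ f → LexLt (faceCenter g) (faceCenter f)))
    (hnotbd : ∀ e ∈ faceEdges f, ∃ g ∈ M, g ≠ f ∧ e ∈ faceEdges g) :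
    (⟨0, by omega⟩ : Fin d) ∉ f.1 := by
  intro h0
  set z : Fin d := ⟨0, by omega⟩ with hzdef
  have hz : ∀ j, z ≤ j := fun j => Fin.mk_le_of_le_val (Nat.zero_le _)
  rcases hext with hext | hext
  · obtain ⟨g, hg, hgf, hge⟩ := hnotbd (f.1.erase z, f.2) (by
      simp only [faceEdges, Finset.mem_biUnion]
      exact ⟨z, h0, by simp⟩)
    have hle := (hext g hg hgf).zero_le z hz
    rcases edge_cases f.1 f.2 z h0 g hge with ⟨h1, h2 | h2⟩ | ⟨h1, h2⟩
    · exact hgf (Prod.ext h1 h2)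
    · simp only [faceCenter, h1, ← h2, h0, if_true, Pi.add_apply, Pi.single_eq_same] at hle
      push_cast at hle
      linarith
    · simp only [faceCenter, h1, h2, h0, if_true, if_false] at hle
      linarith
  · obtain ⟨g, hg, hgf, hge⟩ := hnotbd (f.1.erase z, f.2 + Pi.single z 1) (by
      simp only [faceEdges, Finset.mem_biUnion]
      exact ⟨z, h0, by simp⟩)
    have hle := (hext g hg hgf).zero_le z hz
    rcases edge_cases f.1 _ z h0 g hge with ⟨h1, h2 | h2⟩ | ⟨h1, h2⟩
    · simp only [faceCenter, h1, h2, h0, if_true, Pi.add_apply, Pi.single_eq_same] at hle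
      push_cast at hle
      linarith
    · exact hgf (Prod.ext h1 (add_right_cancel h2))
    · simp only [faceCenter, h1, h2, h0, if_true, if_false, Pi.add_apply,
        Pi.single_eq_same] at hle
      push_cast at hle
      linarith
end
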